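/- arXiv:2507.14113 — 6 statements merged into one kernel-verified Lean document; each statement's English description precedes it below -/
import Mathlib

section
/- There exist compact metrizable spaces X₁ and X₂ and homeomorphisms T₁ : X₁ → X₁ and T₂ : X₂ → X₂ such that both dynamical systems (X₁,T₁) and (X₂,T₂) have dense periodic measures, but the product system (X₁ × X₂, T₁ × T₂) does not have dense periodic measures. -/
open MeasureTheory Topology

/-- A dynamical system `(X,T)` has *dense periodic measures* if the finitely supported
`T`-invariant Borel probability measures are dense (in the weak-* topology) in the space of
all `T`-invariant Borel probability measures. -/
def DensePeriodicMeasures {X : Type*} [TopologicalSpace X] [MeasurableSpace X]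
    [OpensMeasurableSpace X] (T : X → X) : Prop :=
  ∀ μ : ProbabilityMeasure X, μ.toMeasure.map T = μ.toMeasure →
    μ ∈ closure {ν : ProbabilityMeasure X |
      ν.toMeasure.map T = ν.toMeasure ∧ ∃ s : Finset X, ν.toMeasure ↑s = 1}

/-!
Let `p k → α` be the partial sums of a Liouville number, viewed in the circle. Over
`K = {α, p 0, p 2, …}` consider the rotation of each fibre `{a} × ℝ/ℤ` by `a`. Only the fibre over
`α` is free of periodic points, but `p k` has order at most `N k` and lies much closer to `α` than
`1 / N k`. Replacing the base point by a nearby `p k` therefore shadows orbits by closed orbits, and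
averaging along these closed orbits approximates every invariant measure.

Do the same over `L = {α, p 1, p 3, …}`. In the product, `F = χ (x - y)` satisfies `F ∘ T = c F`
with `c = χ (a - b)`, and `c ≠ 1` at every periodic point, as `K ∩ L = {α}` and `α` is of infinite
order. Hence every finitely supported invariant measure integrates `F` to zero, whereas Haar measure
on the diagonal of the fibre over `(α, α)` integrates it to one.
-/

open Filter Function Set
open scoped ENNReal

section OrbitAverage

variable {X : Type*} [MeasurableSpace X] {T : X → X} {N : ℕ} {μ : Measure X}

/-- The average `N⁻¹ • ∑ j < N, μ ∘ T⁻ʲ` of the first `N` push-forwards of `μ` under `T`. For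
`N = 0` this is the zero measure. -/
noncomputable def orbitAverage (T : X → X) (N : ℕ) (μ : Measure X) : Measure X :=
  (N : ℝ≥0∞)⁻¹ • ∑ j ∈ Finset.range N, μ.map T^[j]

lemma orbitAverage_apply (hT : Measurable T) {s : Set X} (hs : MeasurableSet s) :
    orbitAverage T N μ s = (N : ℝ≥0∞)⁻¹ * ∑ j ∈ Finset.range N, μ (T^[j] ⁻¹' s) := by
  simp only [orbitAverage, Measure.smul_apply, Measure.finsetSum_apply, smul_eq_mul,
    Measure.map_apply (hT.iterate _) hs]

lemma orbitAverage_apply_of_forall_eq (hT : Measurable T) (hN : N ≠ 0) {s : Set X}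
    (hs : MeasurableSet s) {c : ℝ≥0∞} (h : ∀ j < N, μ (T^[j] ⁻¹' s) = c) :
    orbitAverage T N μ s = c := by
  rw [orbitAverage_apply hT hs, Finset.sum_congr rfl fun j hj => h j (Finset.mem_range.1 hj),
    Finset.sum_const, Finset.card_range, nsmul_eq_mul, ← mul_assoc,
    ENNReal.inv_mul_cancel (Nat.cast_ne_zero.2 hN) (ENNReal.natCast_ne_top N), one_mul]

lemma isProbabilityMeasure_orbitAverage [IsProbabilityMeasure μ] (hT : Measurable T)
    (hN : N ≠ 0) : IsProbabilityMeasure (orbitAverage T N μ) :=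
  ⟨orbitAverage_apply_of_forall_eq hT hN .univ fun _ _ => by simp⟩

lemma orbitAverage_eq_self (hμ : MeasurePreserving T μ μ) (hN : N ≠ 0) :
    orbitAverage T N μ = μ :=
  Measure.ext fun _ hs => orbitAverage_apply_of_forall_eq hμ.measurable hN hs fun j _ =>
    (hμ.iterate j).measure_preimage hs.nullMeasurableSet

lemma map_orbitAverage (hT : Measurable T) (hμ : μ.map T^[N] = μ) :
    (orbitAverage T N μ).map T = orbitAverage T N μ := by
  have map_iterate (j : ℕ) : (μ.map T^[j]).map T = μ.map T^[j + 1] := by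
    rw [Measure.map_map hT (hT.iterate j), iterate_succ']
  rw [orbitAverage, Measure.map_smul, Measure.map_finset_sum hT.aemeasurable]
  simp only [map_iterate]
  congr 1
  cases N with
  | zero => rfl
  | succ M => rw [Finset.sum_range_succ, hμ, Finset.sum_range_succ', iterate_zero, Measure.map_id]

end OrbitAverage

section Shadowing

/-- Every point is `ε`-shadowed along a common number `N` of steps, at the end of which the
shadowing orbit closes up, and the shadowing points can be chosen measurably from a finite set. -/
def HasFinitePeriodicShadowing {X : Type*} [PseudoMetricSpace X] [MeasurableSpace X]
    (T : X → X) : Prop :=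
  ∀ ε > 0, ∃ N ≠ 0, ∃ π : X → X, Measurable π ∧ (range π).Finite ∧
    (∀ x, IsPeriodicPt T N (π x)) ∧ ∀ x, ∀ j < N, dist (T^[j] x) (T^[j] (π x)) < ε

variable {X : Type*} [PseudoMetricSpace X] [MeasurableSpace X]

lemma mem_closure_of_forall_levyProkhorovEDist_le [TopologicalSpace.SeparableSpace X] [BorelSpace X]
    {S : Set (ProbabilityMeasure X)} {μ : ProbabilityMeasure X}
    (h : ∀ ε > 0, ∃ ν ∈ S, levyProkhorovEDist μ.toMeasure ν.toMeasure ≤ ENNReal.ofReal ε) :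
    μ ∈ closure S := by
  rw [LevyProkhorov.probabilityMeasureHomeomorph.isInducing.closure_eq_preimage_closure_image]
  refine Metric.mem_closure_iff.2 fun ε hε => ?_
  obtain ⟨ν, hν, hdist⟩ := h (ε / 2) (half_pos hε)
  refine ⟨_, mem_image_of_mem _ hν, lt_of_le_of_lt ?_ (half_lt_self hε)⟩
  exact ENNReal.toReal_le_of_le_ofReal (half_pos hε).le hdist

lemma levyProkhorovEDist_orbitAverage_map_le [OpensMeasurableSpace X] {T π : X → X} {N : ℕ} {ε : ℝ}
    {μ : Measure X} [IsProbabilityMeasure μ] (hμ : MeasurePreserving T μ μ) (hπ : Measurable π)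
    (hN : N ≠ 0) (h : ∀ x, ∀ j < N, dist (T^[j] x) (T^[j] (π x)) < ε) :
    levyProkhorovEDist μ (orbitAverage T N (μ.map π)) ≤ ENNReal.ofReal ε := by
  have hT := hμ.measurable
  have : IsProbabilityMeasure (μ.map π) := Measure.isProbabilityMeasure_map hπ.aemeasurable
  have := isProbabilityMeasure_orbitAverage (μ := μ.map π) hT hN
  refine levyProkhorovEDist_le_of_forall_le _ _ _ fun δ B hδ hδtop hB => le_add_right ?_
  have hεδ : ε ≤ δ.toReal := (ENNReal.ofReal_le_iff_le_toReal hδtop.ne).1 hδ.le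
  have hthick : MeasurableSet (Metric.thickening δ.toReal B) :=
    Metric.isOpen_thickening.measurableSet
  calc μ B = (N : ℝ≥0∞)⁻¹ * ∑ j ∈ Finset.range N, μ (T^[j] ⁻¹' B) := by
        rw [← orbitAverage_apply hT hB, orbitAverage_eq_self hμ hN]
    _ ≤ (N : ℝ≥0∞)⁻¹ * ∑ j ∈ Finset.range N,
          μ.map π (T^[j] ⁻¹' Metric.thickening δ.toReal B) := by
        refine mul_le_mul_right (Finset.sum_le_sum fun j hj => ?_) _
        rw [Measure.map_apply hπ (hT.iterate j hthick)]
        refine measure_mono fun x hx => Metric.mem_thickening_iff.2 ⟨_, hx, ?_⟩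
        rw [dist_comm]
        exact (h x j (Finset.mem_range.1 hj)).trans_le hεδ
    _ = orbitAverage T N (μ.map π) (Metric.thickening δ.toReal B) :=
        (orbitAverage_apply hT hthick).symm

theorem HasFinitePeriodicShadowing.densePeriodicMeasures [TopologicalSpace.SeparableSpace X]
    [BorelSpace X] [MeasurableSingletonClass X] {T : X → X} (hT : Measurable T)
    (h : HasFinitePeriodicShadowing T) : DensePeriodicMeasures T := by
  intro μ hμ
  refine mem_closure_of_forall_levyProkhorovEDist_le fun ε hε => ?_
  obtain ⟨N, hN, π, hπ, hfin, hper, hclose⟩ := h ε hε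
  have hprob : IsProbabilityMeasure (μ.toMeasure.map π) :=
    Measure.isProbabilityMeasure_map hπ.aemeasurable
  refine ⟨⟨orbitAverage T N (μ.toMeasure.map π), isProbabilityMeasure_orbitAverage hT hN⟩, ⟨?_, ?_⟩,
    levyProkhorovEDist_orbitAverage_map_le ⟨hT, hμ⟩ hπ hN hclose⟩
  · refine map_orbitAverage hT ?_
    rw [Measure.map_map (hT.iterate N) hπ]
    exact congrArg μ.toMeasure.map (funext hper)
  · have horbits : (⋃ j ∈ Finset.range N, T^[j] '' range π).Finite :=
      (Finset.finite_toSet _).biUnion fun j _ => hfin.image _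
    refine ⟨horbits.toFinset, orbitAverage_apply_of_forall_eq hT hN (Finset.measurableSet _) ?_⟩
    intro j hj
    rw [Measure.map_apply hπ (hT.iterate j (Finset.measurableSet _))]
    convert measure_univ (μ := μ.toMeasure)
    refine eq_univ_of_forall fun x => ?_
    rw [Finite.coe_toFinset]
    exact mem_biUnion (Finset.mem_range.2 hj) (mem_image_of_mem _ (mem_range_self x))

end Shadowing

section FiberRotation

/-- The skew rotation `(a, x) ↦ (a, x + a)` of `K × G`, which rotates the fibre over `a ∈ K` by
`a` itself. -/
def fiberRotation {G : Type*} [AddCommGroup G] [TopologicalSpace G] [IsTopologicalAddGroup G]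
    (K : Set G) : K × G ≃ₜ K × G where
  toEquiv := (Equiv.refl K).prodShear fun a => Equiv.addRight (a : G)
  continuous_toFun := by
    change Continuous fun p : K × G => (p.1, p.2 + p.1)
    fun_prop
  continuous_invFun := by
    change Continuous fun p : K × G => (p.1, p.2 + -p.1)
    fun_prop

section Group

variable {G : Type*} [AddCommGroup G] [TopologicalSpace G] [IsTopologicalAddGroup G] {K : Set G}

lemma fiberRotation_apply (p : K × G) : fiberRotation K p = (p.1, p.2 + p.1) := rfl

lemma iterate_fiberRotation (j : ℕ) (p : K × G) :
    (fiberRotation K)^[j] p = (p.1, p.2 + j • (p.1 : G)) := by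
  induction j with
  | zero => simp
  | succ j ih => rw [iterate_succ_apply', ih, fiberRotation_apply, succ_nsmul, add_assoc]

lemma isPeriodicPt_fiberRotation_iff {n : ℕ} {p : K × G} :
    IsPeriodicPt (fiberRotation K) n p ↔ n • (p.1 : G) = 0 := by
  simp [IsPeriodicPt, IsFixedPt, iterate_fiberRotation, Prod.ext_iff]

end Group

variable {G : Type*} [NormedAddCommGroup G] {K : Set G}

lemma dist_iterate_fiberRotation_lt {p q : K × G} {N j : ℕ} {ε : ℝ} (hj : j < N)
    (hbase : N * dist p.1 q.1 < ε / 2) (hfiber : dist p.2 q.2 < ε / 2) :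
    dist ((fiberRotation K)^[j] p) ((fiberRotation K)^[j] q) < ε := by
  have hN : (1 : ℝ) ≤ N := by exact_mod_cast Nat.one_le_of_lt hj
  have hjN : (j : ℝ) ≤ N := by exact_mod_cast hj.le
  have hdist : 0 ≤ dist p.1 q.1 := dist_nonneg
  have hrot : dist (j • (p.1 : G)) (j • (q.1 : G)) ≤ N * dist p.1 q.1 :=
    calc dist (j • (p.1 : G)) (j • (q.1 : G)) = ‖j • ((p.1 : G) - q.1)‖ := by
          rw [dist_eq_norm, smul_sub]
      _ ≤ j * dist p.1 q.1 := by
          rw [Subtype.dist_eq, dist_eq_norm]; exact norm_nsmul_le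
      _ ≤ N * dist p.1 q.1 := by gcongr
  rw [iterate_fiberRotation, iterate_fiberRotation, Prod.dist_eq, max_lt_iff]
  constructor
  · change dist p.1 q.1 < ε
    nlinarith [le_mul_of_one_le_left hdist hN]
  · calc dist (p.2 + j • (p.1 : G)) (q.2 + j • (q.1 : G))
        ≤ dist p.2 q.2 + dist (j • (p.1 : G)) (j • (q.1 : G)) := dist_add_add_le _ _ _ _
      _ < ε := by linarith

lemma exists_measurable_finite_range_dist_lt {X : Type*} [PseudoMetricSpace X] [CompactSpace X]
    [MeasurableSpace X] [OpensMeasurableSpace X] {ε : ℝ} (hε : 0 < ε) :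
    ∃ r : X → X, Measurable r ∧ (range r).Finite ∧ ∀ x, dist x (r x) < ε := by
  cases isEmpty_or_nonempty X
  · exact ⟨id, measurable_id, finite_range id, isEmptyElim⟩
  let e := TopologicalSpace.denseSeq X
  have hcover : (univ : Set X) ⊆ ⋃ n, Metric.ball (e n) ε := fun x _ =>
    mem_iUnion.2 ((TopologicalSpace.denseRange_denseSeq X).exists_dist_lt x hε)
  obtain ⟨t, ht⟩ := isCompact_univ.elim_finite_subcover _ (fun _ => Metric.isOpen_ball) hcover
  let r := SimpleFunc.nearestPt e (t.sup id)
  refine ⟨r, r.measurable, r.finite_range, fun x => ?_⟩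
  obtain ⟨n, hn, hx⟩ : ∃ n ∈ t, x ∈ Metric.ball (e n) ε := by simpa using ht (mem_univ x)
  rw [dist_comm, ← edist_lt_ofReal]
  calc edist (r x) x ≤ edist (e n) x :=
        SimpleFunc.edist_nearestPt_le e x (Finset.le_sup (f := id) hn)
    _ < ENNReal.ofReal ε := by rwa [edist_lt_ofReal, dist_comm]

theorem hasFinitePeriodicShadowing_fiberRotation [CompactSpace G] [MeasurableSpace G]
    [BorelSpace G]
    (h : ∀ ε > 0, ∃ N : ℕ, N ≠ 0 ∧ ∃ κ : K → K, Measurable κ ∧ (range κ).Finite ∧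
      (∀ a, N • (κ a : G) = 0) ∧ ∀ a, N * dist a (κ a) < ε) :
    HasFinitePeriodicShadowing (fiberRotation K) := by
  intro ε hε
  obtain ⟨N, hN, κ, hκ, hκfin, htorsion, hκdist⟩ := h (ε / 2) (half_pos hε)
  obtain ⟨r, hr, hrfin, hrdist⟩ := exists_measurable_finite_range_dist_lt (X := G) (half_pos hε)
  refine ⟨N, hN, Prod.map κ r, hκ.prodMap hr, ?_, fun p => ?_, fun p j hj => ?_⟩
  · rw [range_prodMap]
    exact hκfin.prod hrfin
  · exact isPeriodicPt_fiberRotation_iff.2 (htorsion p.1)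
  · exact dist_iterate_fiberRotation_lt hj (hκdist p.1) (hrdist p.2)

end FiberRotation

section TorsionApprox

/-- The elements `p k` of `G`, killed by the integers `N k`, converge to `α` faster than `1 / N k`.
The `N k` divide one another, so that `N k` also kills `p m` for all `m ≤ k`. -/
structure IsTorsionApprox {G : Type*} [NormedAddCommGroup G] (N : ℕ → ℕ) (p : ℕ → G) (α : G) :
    Prop where
  ne_zero : ∀ k, N k ≠ 0
  dvd : ∀ m k, m ≤ k → N m ∣ N k
  nsmul_eq_zero : ∀ k, N k • p k = 0
  tendsto_mul_dist : Tendsto (fun k => N k * dist (p k) α) atTop (𝓝 0)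

namespace IsTorsionApprox

variable {G : Type*} [NormedAddCommGroup G] {N : ℕ → ℕ} {p : ℕ → G} {α : G}

lemma comp (h : IsTorsionApprox N p α) {φ : ℕ → ℕ} (hφ : StrictMono φ) :
    IsTorsionApprox (N ∘ φ) (p ∘ φ) α where
  ne_zero k := h.ne_zero (φ k)
  dvd m k hmk := h.dvd (φ m) (φ k) (hφ.monotone hmk)
  nsmul_eq_zero k := h.nsmul_eq_zero (φ k)
  tendsto_mul_dist := h.tendsto_mul_dist.comp hφ.tendsto_atTop

lemma nsmul_eq_zero_of_le (h : IsTorsionApprox N p α) {m k : ℕ} (hmk : m ≤ k) :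
    N k • p m = 0 := by
  obtain ⟨d, hd⟩ := h.dvd m k hmk
  rw [hd, mul_nsmul, h.nsmul_eq_zero, smul_zero]

lemma mul_dist_le_of_le (h : IsTorsionApprox N p α) {m k : ℕ} (hkm : k ≤ m) :
    N k * dist (p m) α ≤ N m * dist (p m) α := by
  gcongr
  exact Nat.le_of_dvd (Nat.pos_of_ne_zero (h.ne_zero m)) (h.dvd k m hkm)

lemma tendsto (h : IsTorsionApprox N p α) : Tendsto p atTop (𝓝 α) := by
  refine tendsto_iff_dist_tendsto_zero.2 <|
    squeeze_zero (fun _ => dist_nonneg) (fun k => ?_) h.tendsto_mul_dist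
  exact le_mul_of_one_le_left dist_nonneg (by exact_mod_cast Nat.one_le_iff_ne_zero.2 (h.ne_zero k))

lemma isCompact (h : IsTorsionApprox N p α) : IsCompact (insert α (range p)) :=
  h.tendsto.isCompact_insert_range

lemma exists_mul_dist_lt (h : IsTorsionApprox N p α) {ε : ℝ} (hε : 0 < ε) :
    ∃ k, ∀ a ∈ insert α (range p), a ∈ p '' Iic k ∨ N k * dist a (p k) < ε := by
  obtain ⟨k, hk⟩ := eventually_atTop.1 (h.tendsto_mul_dist.eventually_lt_const (half_pos hε))
  refine ⟨k, ?_⟩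
  rintro a (rfl | ⟨m, rfl⟩)
  · right
    rw [dist_comm]
    linarith [hk k le_rfl]
  · refine (le_total m k).imp (mem_image_of_mem p) fun hkm => ?_
    calc N k * dist (p m) (p k) ≤ N k * (dist (p m) α + dist (p k) α) := by
          gcongr; exact dist_triangle_right _ _ _
      _ = N k * dist (p m) α + N k * dist (p k) α := mul_add _ _ _
      _ < ε := by linarith [h.mul_dist_le_of_le hkm, hk m hkm, hk k le_rfl]

lemma exists_torsion_retraction [MeasurableSpace G] [BorelSpace G] (h : IsTorsionApprox N p α)
    {ε : ℝ} (hε : 0 < ε) :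
    ∃ n : ℕ, n ≠ 0 ∧ ∃ κ : ↥(insert α (range p)) → ↥(insert α (range p)),
      Measurable κ ∧ (range κ).Finite ∧ (∀ a, n • (κ a : G) = 0) ∧ ∀ a, n * dist a (κ a) < ε := by
  classical
  obtain ⟨k, hk⟩ := h.exists_mul_dist_lt hε
  have : Countable ↥(insert α (range p)) := ((countable_range p).insert α).to_subtype
  let κ : ↥(insert α (range p)) → ↥(insert α (range p)) := fun a =>
    if (a : G) ∈ p '' Iic k then a else ⟨p k, .inr (mem_range_self k)⟩
  have hκ_mem (a) : (κ a : G) ∈ p '' Iic k := by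
    by_cases ha : (a : G) ∈ p '' Iic k
    · simpa only [κ, if_pos ha]
    · simpa only [κ, if_neg ha] using mem_image_of_mem p self_mem_Iic
  refine ⟨N k, h.ne_zero k, κ, measurable_of_countable κ, ?_, fun a => ?_, fun a => ?_⟩
  · refine (((finite_Iic k).image p).preimage Subtype.val_injective.injOn).subset ?_
    exact range_subset_iff.2 hκ_mem
  · obtain ⟨m, hm, hma⟩ := hκ_mem a
    rw [← hma]
    exact h.nsmul_eq_zero_of_le hm
  · by_cases ha : (a : G) ∈ p '' Iic k
    · simpa only [κ, if_pos ha, dist_self, mul_zero]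
    · simpa only [κ, if_neg ha, Subtype.dist_eq] using (hk a a.2).resolve_left ha

theorem densePeriodicMeasures_fiberRotation [CompactSpace G] [MeasurableSpace G] [BorelSpace G]
    (h : IsTorsionApprox N p α) :
    DensePeriodicMeasures (fiberRotation (insert α (range p))) := by
  have := isCompact_iff_compactSpace.1 h.isCompact
  exact (hasFinitePeriodicShadowing_fiberRotation fun _ hε =>
    h.exists_torsion_retraction hε).densePeriodicMeasures (fiberRotation _).continuous.measurable

end IsTorsionApprox

end TorsionApprox

section FinitelySupported

variable {X 𝕜 : Type*} [RCLike 𝕜] [MeasurableSpace X] [MeasurableSingletonClass X] {T : X → X}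
  {ν : Measure X}

lemma mem_periodicPts_of_measure_singleton_ne_zero [IsFiniteMeasure ν]
    (hν : MeasurePreserving T ν ν) {x : X} (hx : ν {x} ≠ 0) : x ∈ periodicPts T := by
  obtain ⟨_, rfl, n, hn, hreturn⟩ := hν.conservative.exists_mem_iterate_mem
    (measurableSet_singleton x).nullMeasurableSet hx
  exact ⟨n, Nat.pos_of_ne_zero hn, hreturn⟩

lemma ae_mem_periodicPts [IsFiniteMeasure ν] (hν : MeasurePreserving T ν ν) {s : Set X}
    (hs : s.Countable) (hνs : ∀ᵐ x ∂ν, x ∈ s) : ∀ᵐ x ∂ν, x ∈ periodicPts T := by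
  have hnull : ν (s \ periodicPts T) = 0 :=
    (measure_null_iff_singleton (hs.mono sdiff_subset)).2 fun x hx =>
      by_contra fun h => hx.2 (mem_periodicPts_of_measure_singleton_ne_zero hν h)
  filter_upwards [hνs, measure_eq_zero_iff_ae_notMem.1 hnull] with x hxs hx
  exact by_contra fun h => hx ⟨hxs, h⟩

lemma integrable_of_ae_mem_finite [IsFiniteMeasure ν] {s : Set X} (hs : s.Finite)
    (hνs : ∀ᵐ x ∂ν, x ∈ s) (f : X → 𝕜) : Integrable f ν := by
  rw [← Measure.restrict_eq_self_of_ae_mem hνs]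
  exact IntegrableOn.of_finite hs

lemma integral_eq_zero_of_comp_eq_mul [IsFiniteMeasure ν] (hν : MeasurePreserving T ν ν) {s : Set X}
    (hs : s.Finite) (hνs : ∀ᵐ x ∂ν, x ∈ s) {F c : X → 𝕜} (hF : ∀ x, F (T x) = c x * F x)
    (hcT : ∀ x, c (T x) = c x) (hc : ∀ x ∈ periodicPts T, c x ≠ 1) : ∫ x, F x ∂ν = 0 := by
  -- On periodic points, `F` is the coboundary `h ∘ T - h`.
  let h : X → 𝕜 := fun x => F x / (c x - 1)
  have hint (f : X → 𝕜) : Integrable f ν := integrable_of_ae_mem_finite hs hνs f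
  have hcobound : ∀ᵐ x ∂ν, F x = h (T x) - h x := by
    filter_upwards [ae_mem_periodicPts hν hs.countable hνs] with x hx
    have hx1 : c x - 1 ≠ 0 := sub_ne_zero.2 (hc x hx)
    simp only [h, hF, hcT]
    field_simp
  have hinv : ∫ x, h (T x) ∂ν = ∫ x, h x ∂ν := by
    conv_rhs => rw [← hν.map_eq]
    refine (integral_map hν.aemeasurable ?_).symm
    rw [hν.map_eq]
    exact (hint h).aestronglyMeasurable
  rw [integral_congr_ae hcobound, integral_sub (hint _) (hint h), hinv, sub_self]

end FinitelySupported

open scoped BoundedContinuousFunction in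
theorem DensePeriodicMeasures.integral_eq_zero {X 𝕜 : Type*} [RCLike 𝕜] [TopologicalSpace X]
    [T1Space X] [MeasurableSpace X] [OpensMeasurableSpace X] {T : X → X}
    (h : DensePeriodicMeasures T) (F : X →ᵇ 𝕜) {c : X → 𝕜} (hF : ∀ x, F (T x) = c x * F x)
    (hcT : ∀ x, c (T x) = c x) (hc : ∀ x ∈ periodicPts T, c x ≠ 1) {μ : Measure X}
    [IsProbabilityMeasure μ] (hμ : MeasurePreserving T μ μ) : ∫ x, F x ∂μ = 0 := by
  have hcont : Continuous fun ν : ProbabilityMeasure X => ∫ x, F x ∂ν.toMeasure :=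
    continuous_iff_continuousAt.2 fun _ =>
      (ProbabilityMeasure.tendsto_iff_forall_integral_rclike_tendsto 𝕜).1 tendsto_id F
  refine closure_minimal ?_ (isClosed_eq hcont continuous_const) (h ⟨μ, inferInstance⟩ hμ.map_eq)
  rintro ν ⟨hν, s, hs⟩
  have hae : ∀ᵐ x ∂ν.toMeasure, x ∈ (s : Set X) := (mem_ae_iff_prob_eq_one s.measurableSet).2 hs
  exact integral_eq_zero_of_comp_eq_mul ⟨hμ.measurable, hν⟩ s.finite_toSet hae hF hcT hc

section ProductOfFiberRotations

open scoped BoundedContinuousFunction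

/-- The diagonal of the fibre `G × G` over `(a, a)`, where `a ∈ K ∩ L`. -/
def fiberDiagonal {G : Type*} {K L : Set G} (a : ↥(K ∩ L)) (x : G) : (K × G) × (L × G) :=
  ((⟨a, a.2.1⟩, x), (⟨a, a.2.2⟩, x))

lemma measurable_fiberDiagonal {G : Type*} [MeasurableSpace G] {K L : Set G}
    (a : ↥(K ∩ L)) : Measurable (fiberDiagonal a) := by
  unfold fiberDiagonal
  fun_prop

variable {G : Type*} [AddCommGroup G] [TopologicalSpace G] [IsTopologicalAddGroup G]
  {K L : Set G} {α : G}

lemma ne_of_mem_periodicPts_prodMap_fiberRotation (hα : ¬IsOfFinAddOrder α)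
    (hKL : K ∩ L ⊆ {α}) {p : (K × G) × (L × G)}
    (hp : p ∈ periodicPts (Prod.map (fiberRotation K) (fiberRotation L))) :
    (p.1.1 : G) ≠ p.2.1 := by
  intro hbase
  obtain ⟨n, hn, hper⟩ := hp
  have hpα : (p.1.1 : G) = α := hKL ⟨p.1.1.2, hbase ▸ p.2.1.2⟩
  have hnα : n • (p.1.1 : G) = 0 :=
    isPeriodicPt_fiberRotation_iff.1 ((isPeriodicPt_prodMap _).1 hper).1
  exact hα (isOfFinAddOrder_iff_nsmul_eq_zero.2 ⟨n, hn, hpα ▸ hnα⟩)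

variable [MeasurableSpace G] [BorelSpace G] [SecondCountableTopology G]

lemma measurePreserving_prodMap_fiberRotation (m : Measure G) [m.IsAddRightInvariant]
    (a : ↥(K ∩ L)) :
    MeasurePreserving (Prod.map (fiberRotation K) (fiberRotation L))
      (m.map (fiberDiagonal a)) (m.map (fiberDiagonal a)) := by
  have hδ := measurable_fiberDiagonal a
  have hT : Measurable (Prod.map (fiberRotation K) (fiberRotation L)) :=
    (fiberRotation K).measurable.prodMap (fiberRotation L).measurable
  have hcomm : Prod.map (fiberRotation K) (fiberRotation L) ∘ fiberDiagonal a =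
      fiberDiagonal a ∘ (· + (a : G)) := rfl
  refine ⟨hT, ?_⟩
  rw [Measure.map_map hT hδ, hcomm, ← Measure.map_map hδ (measurable_add_const _),
    map_add_right_eq_self]

theorem not_densePeriodicMeasures_prodMap_fiberRotation (hα : ¬IsOfFinAddOrder α)
    (hKL : K ∩ L = {α}) {χ : AddChar G Circle} (hχ : Continuous χ) (hχinj : Injective χ)
    (m : Measure G) [IsProbabilityMeasure m] [m.IsAddRightInvariant] :
    ¬DensePeriodicMeasures (Prod.map (fiberRotation K) (fiberRotation L)) := by
  intro hdense
  have := t1Space_of_injective_of_continuous hχinj hχ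
  let T := Prod.map (fiberRotation K) (fiberRotation L)
  let F : ((K × G) × (L × G)) →ᵇ ℂ := .ofNormedAddCommGroup
    (fun p => χ (p.1.2 - p.2.2)) (by fun_prop) 1 fun p => (Circle.norm_coe _).le
  let c : (K × G) × (L × G) → ℂ := fun p => χ (p.1.1 - p.2.1)
  have hF (p) : F (T p) = c p * F p := by
    change (χ (p.1.2 + p.1.1 - (p.2.2 + p.2.1)) : ℂ) = c p * F p
    rw [add_sub_add_comm, χ.map_add_eq_mul, Circle.coe_mul, mul_comm]
    rfl
  have hc : ∀ p ∈ periodicPts T, c p ≠ 1 := fun p hp hcp => by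
    refine ne_of_mem_periodicPts_prodMap_fiberRotation hα hKL.subset hp (sub_eq_zero.1 (hχinj ?_))
    exact (Circle.coe_eq_one.1 hcp).trans χ.map_zero_eq_one.symm
  let a : ↥(K ∩ L) := ⟨α, hKL ▸ mem_singleton α⟩
  have hδ := measurable_fiberDiagonal a
  have := Measure.isProbabilityMeasure_map (μ := m) hδ.aemeasurable
  have hint_zero : ∫ p, F p ∂(m.map (fiberDiagonal a)) = 0 :=
    hdense.integral_eq_zero F hF (fun _ => rfl) hc (measurePreserving_prodMap_fiberRotation m a)
  have hint_one : ∫ p, F p ∂(m.map (fiberDiagonal a)) = 1 := by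
    rw [integral_map hδ.aemeasurable F.continuous.aestronglyMeasurable]
    simp [F, fiberDiagonal]
  exact one_ne_zero (hint_one.symm.trans hint_zero)

end ProductOfFiberRotations

section Liouville

open LiouvilleNumber
open scoped Nat

variable {b : ℕ}

lemma tendsto_pow_factorial_mul_remainder {b : ℝ} (hb : 2 ≤ b) :
    Tendsto (fun k => b ^ k ! * remainder b k) atTop (𝓝 0) := by
  have hb1 : 1 < b := one_lt_two.trans_le hb
  have hb0 : 0 < b := one_pos.trans hb1
  have hpow : Tendsto (fun k => (b⁻¹) ^ k) atTop (𝓝 0) :=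
    tendsto_pow_atTop_nhds_zero_of_lt_one (inv_pos.2 hb0).le (inv_lt_one_of_one_lt₀ hb1)
  refine squeeze_zero' (.of_forall fun k => ?_) ?_ hpow
  · have := remainder_pos hb1 k
    positivity
  · filter_upwards [eventually_ge_atTop 2] with k hk
    calc b ^ k ! * remainder b k ≤ b ^ k ! * (1 / (b ^ k !) ^ k) := by
          gcongr
          exact (remainder_lt k hb).le
      _ ≤ b ^ k ! * (1 / (b ^ k !) ^ 2) := by
          gcongr
          exact one_le_pow₀ hb1.le
      _ = (b⁻¹) ^ k ! := by
          rw [inv_pow]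
          field_simp
      _ ≤ (b⁻¹) ^ k :=
          pow_le_pow_of_le_one (inv_pos.2 hb0).le (inv_lt_one_of_one_lt₀ hb1).le
            k.self_le_factorial

lemma dist_coe_partialSum_le {b : ℝ} (hb : 1 < b) (k : ℕ) :
    dist (partialSum b k : UnitAddCircle) (liouvilleNumber b : UnitAddCircle) ≤ remainder b k := by
  rw [dist_comm, dist_eq_norm, ← AddCircle.coe_sub, ← partialSum_add_remainder hb k,
    add_sub_cancel_left]
  exact QuotientAddGroup.norm_mk_le_norm.trans_eq (Real.norm_of_nonneg (remainder_pos hb k).le)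

lemma isTorsionApprox_liouvilleNumber (hb : 2 ≤ b) :
    IsTorsionApprox (fun k => b ^ k !) (fun k => (partialSum b k : UnitAddCircle))
      (liouvilleNumber b : UnitAddCircle) where
  ne_zero k := by positivity
  dvd m k hmk := pow_dvd_pow b (Nat.factorial_le hmk)
  nsmul_eq_zero k := by
    obtain ⟨n, hn⟩ := partialSum_eq_rat (zero_lt_two.trans_le hb) k
    rw [← AddCircle.coe_nsmul, AddCircle.coe_eq_zero_iff]
    refine ⟨n, ?_⟩
    rw [hn, zsmul_one, Int.cast_natCast, nsmul_eq_mul, mul_div_cancel₀ _ (by positivity)]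
  tendsto_mul_dist := by
    have hb' : (2 : ℝ) ≤ b := by exact_mod_cast hb
    refine squeeze_zero (fun k => by positivity) (fun k => ?_)
      (tendsto_pow_factorial_mul_remainder hb')
    push_cast
    gcongr
    exact dist_coe_partialSum_le (one_lt_two.trans_le hb') k

lemma strictMono_partialSum {b : ℝ} (hb : 0 < b) : StrictMono (partialSum b) :=
  strictMono_nat_of_lt_succ fun k => by
    rw [partialSum_succ]
    exact lt_add_of_pos_right _ (by positivity)

lemma injective_coe_partialSum {b : ℝ} (hb : 2 ≤ b) :
    Injective fun k => (partialSum b k : UnitAddCircle) := by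
  have hb1 : 1 < b := one_lt_two.trans_le hb
  have hmono := strictMono_partialSum (zero_lt_one.trans hb1)
  have hmem (k : ℕ) : partialSum b k ∈ Ico (partialSum b 0) (partialSum b 0 + 1) := by
    refine ⟨hmono.monotone k.zero_le, ?_⟩
    have h0 : remainder b 0 < 1 := by simpa using remainder_lt 0 hb
    linarith [partialSum_add_remainder hb1 0, partialSum_add_remainder hb1 k, remainder_pos hb1 k]
  exact fun m k hmk =>
    hmono.injective ((AddCircle.coe_eq_coe_iff_of_mem_Ico (hmem m) (hmem k)).1 hmk)

lemma not_isOfFinAddOrder_liouvilleNumber (hb : 2 ≤ b) :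
    ¬IsOfFinAddOrder (liouvilleNumber b : UnitAddCircle) := by
  rw [AddCircle.isOfFinAddOrder_iff_exists_rat_eq_div]
  rintro ⟨q, hq⟩
  exact (liouville_liouvilleNumber hb).irrational ⟨q, hq.trans (div_one _)⟩

end Liouville

/-- There exist two dynamical systems (compact metrizable spaces with homeomorphisms) having
dense periodic measures whose product does not have dense periodic measures. -/
theorem exists_product_without_dense_periodic_measures :
    ∃ (X₁ X₂ : Type) (_ : MetricSpace X₁) (_ : MetricSpace X₂)
      (_ : CompactSpace X₁) (_ : CompactSpace X₂)
      (_ : SecondCountableTopology X₁) (_ : SecondCountableTopology X₂)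
      (_ : MeasurableSpace X₁) (_ : MeasurableSpace X₂)
      (_ : BorelSpace X₁) (_ : BorelSpace X₂)
      (T₁ : X₁ ≃ₜ X₁) (T₂ : X₂ ≃ₜ X₂),
      DensePeriodicMeasures ⇑T₁ ∧ DensePeriodicMeasures ⇑T₂ ∧
        ¬ DensePeriodicMeasures (fun p : X₁ × X₂ => (T₁ p.1, T₂ p.2)) := by
  let α : UnitAddCircle := liouvilleNumber (2 : ℕ)
  let p : ℕ → UnitAddCircle := fun k => LiouvilleNumber.partialSum (2 : ℕ) k
  have hp := isTorsionApprox_liouvilleNumber le_rfl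
  have hp_even := hp.comp (φ := fun k => 2 * k) (strictMono_mul_left_of_pos two_pos)
  have hp_odd := hp.comp (φ := fun k => 2 * k + 1) fun _ _ h => by dsimp only; lia
  let K : Set UnitAddCircle := insert α (range (p ∘ fun k => 2 * k))
  let L : Set UnitAddCircle := insert α (range (p ∘ fun k => 2 * k + 1))
  have hKL : K ∩ L = {α} := by
    have hdisj : Disjoint (range (p ∘ fun k => 2 * k)) (range (p ∘ fun k => 2 * k + 1)) :=
      disjoint_range_iff.2 fun i j hij => by
        have : 2 * i = 2 * j + 1 := injective_coe_partialSum (by norm_num) hij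
        lia
    rw [← insert_inter_distrib, hdisj.inter_eq, insert_empty_eq]
  have := isCompact_iff_compactSpace.1 hp_even.isCompact
  have := isCompact_iff_compactSpace.1 hp_odd.isCompact
  refine ⟨K × UnitAddCircle, L × UnitAddCircle, inferInstance, inferInstance, inferInstance,
    inferInstance, inferInstance, inferInstance, inferInstance, inferInstance, inferInstance,
    inferInstance, fiberRotation K, fiberRotation L, hp_even.densePeriodicMeasures_fiberRotation,
    hp_odd.densePeriodicMeasures_fiberRotation, ?_⟩
  exact not_densePeriodicMeasures_prodMap_fiberRotation
    (not_isOfFinAddOrder_liouvilleNumber le_rfl) hKL (χ := AddCircle.toCircle_addChar)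
    AddCircle.continuous_toCircle (AddCircle.injective_toCircle one_ne_zero) AddCircle.haarAddCircle
end

section
/- Let (X,T) be a dynamical system that satisfies partial specification with periods P for some subset P ⊆ ℕ with bounded gaps. Then (X,T) satisfies partial shadowing: for every ε > 0 there exists δ > 0 such that every finite δ-partial pseudo-orbit in X is ε-partially traced by some point of X. -/
open MeasureTheory Topology

/-- A set of natural numbers is infinite with bounded gaps. -/
def BoundedGaps (P : Set ℕ) : Prop :=
  P.Infinite ∧ ∃ B : ℕ, ∀ n ∈ P, ∃ m ∈ P, n < m ∧ m ≤ n + B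

/-- The data `a i, b i` for `i < r` forms an `M`-spaced specification. -/
def MSpacedSpec (M r : ℕ) (a b : ℕ → ℕ) : Prop :=
  (∀ i < r, a i < b i) ∧ ∀ i, i + 1 < r → b i < a (i + 1) ∧ b i + M ≤ a (i + 1)

/-- The specification `{(x i; a i, b i)}_{i < r}` is `ε`-partially traced by `y`. -/
def PartiallyTraces {X : Type*} [MetricSpace X] (T : X → X) (ε : ℝ)
    (r : ℕ) (a b : ℕ → ℕ) (x : ℕ → X) (y : X) : Prop :=
  ∀ i < r, (1 - ε) * ((b i : ℝ) - (a i : ℝ)) <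
    (({n : ℕ | a i ≤ n ∧ n < b i ∧ dist (T^[n] (x i)) (T^[n] y) < ε}).ncard : ℝ)

/-- `(X,T)` satisfies partial specification with periods `P`. -/
def PartialSpecWithPeriods {X : Type*} [MetricSpace X] (T : X → X) (P : Set ℕ) : Prop :=
  ∀ ε : ℝ, 0 < ε → ∃ N M : ℕ, ∀ r : ℕ, 0 < r → ∀ (a b : ℕ → ℕ) (x : ℕ → X),
    MSpacedSpec M r a b → ∀ n ∈ P, N ≤ n → (1 + ε) * (b (r - 1) : ℝ) ≤ (n : ℝ) →
      ∃ y : X, T^[n] y = y ∧ PartiallyTraces T ε r a b x y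

/-- The finite sequence `x 1, …, x N` is a `δ`-partial pseudo-orbit for `T`. -/
def PartialPseudoOrbit {X : Type*} [MetricSpace X] (T : X → X) (δ : ℝ) (N : ℕ)
    (x : ℕ → X) : Prop :=
  N = 1 ∨ (2 ≤ N ∧ (1 - δ) * ((N : ℝ) - 1) <
    (({n : ℕ | 1 ≤ n ∧ n ≤ N - 1 ∧ dist (T (x n)) (x (n + 1)) < δ}).ncard : ℝ))

/-- The finite sequence `x 1, …, x N` is `ε`-partially traced by `y`. -/
def SeqPartiallyTraced {X : Type*} [MetricSpace X] (T : X → X) (ε : ℝ) (N : ℕ)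
    (x : ℕ → X) (y : X) : Prop :=
  (1 - ε) * (N : ℝ) < (({n : ℕ | 1 ≤ n ∧ n ≤ N ∧ dist (x n) (T^[n] y) < ε}).ncard : ℝ)

/-!
Cut the times `1, …, N` into windows of length `K`, each a block of length `L` followed by a gap
just long enough for the specification property, with `L` so large that the gaps make up a
proportion at most `ε` of all times. A block free of jumps is shadowed by a true orbit segment, by
uniform continuity, and a single point partially traces all these segments at once. There are at
most `δ N` jumps, so the blocks containing one lose at most `L δ N ≤ ε N` times. The last block is
truncated at `N`, so short pseudo-orbits need no separate treatment.

For an orbit segment to start near `x a` at time `a`, the range of `T^[a]` has to be dense; it is,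
because it contains the points of large period.
-/

section Counting

open Finset

lemma one_sub_mul_card_lt_ncard_iff {α : Type*} (s : Finset α) (p : α → Prop) [DecidablePred p]
    (ε : ℝ) :
    (1 - ε) * #s < ({a | a ∈ s ∧ p a}.ncard : ℝ) ↔ (#{a ∈ s | ¬ p a} : ℝ) < ε * #s := by
  have hsum : (#{a ∈ s | p a} : ℝ) + #{a ∈ s | ¬ p a} = #s := by
    exact_mod_cast card_filter_add_card_filter_not p
  rw [← coe_filter, Set.ncard_coe_finset]
  constructor <;> intro h <;> linarith

/-- The `i`-th of the consecutive windows of length `K` partitioning the positive integers. -/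
def window (K i : ℕ) : Finset ℕ := Ioc (i * K) (i * K + K)

/-- The first time of the `i`-th window. -/
def blockStart (K i : ℕ) : ℕ := i * K + 1

/-- One more than the last time of the `i`-th block, which consists of the first `L` times of the
`i`-th window, truncated at `N`. It is an exclusive bound, as in `MSpacedSpec`. -/
def blockEnd (K L N i : ℕ) : ℕ := min (i * K + L) N + 1

/-- The `i`-th block, on which the pseudo-orbit is to be traced; the rest of the window is a gap. -/
def block (K L N i : ℕ) : Finset ℕ := Ico (blockStart K i) (blockEnd K L N i)

variable {K L N i n : ℕ}

lemma mem_block : n ∈ block K L N i ↔ i * K < n ∧ n ≤ i * K + L ∧ n ≤ N := by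
  rw [block, blockStart, blockEnd, mem_Ico]
  omega

lemma card_block_le : #(block K L N i) ≤ L := by
  rw [block, blockStart, blockEnd, Nat.card_Ico]
  omega

lemma block_subset_window (hLK : L ≤ K) : block K L N i ⊆ Icc 1 N ∩ window K i := by
  intro n hn
  rw [mem_block] at hn
  rw [window, mem_inter, mem_Icc, mem_Ioc]
  omega

lemma mem_window_iff_div_eq (hK : 0 < K) (hn : 0 < n) : n ∈ window K i ↔ (n - 1) / K = i := by
  rw [window, mem_Ioc, Nat.div_eq_iff hK]
  omega

lemma card_eq_sum_card_inter_window (hK : 0 < K) {s : Finset ℕ} (hs : s ⊆ Icc 1 N) :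
    #s = ∑ i ∈ range N, #(s ∩ window K i) := by
  have hmaps : Set.MapsTo (fun n => (n - 1) / K) (s : Set ℕ) (range N) := by
    intro n hn
    have hnN := mem_Icc.1 (hs hn)
    exact mem_coe.2 (mem_range.2 ((Nat.div_le_self (n - 1) K).trans_lt (by omega)))
  rw [card_eq_sum_card_fiberwise hmaps]
  refine sum_congr rfl fun i _ => congrArg card ?_
  ext n
  rw [mem_filter, mem_inter]
  exact and_congr_right fun hn => (mem_window_iff_div_eq hK (mem_Icc.1 (hs hn)).1).symm

lemma card_window_sdiff_block_le {ε : ℝ} (hε : 0 ≤ ε) (hLK : L ≤ K) (hgap : (K : ℝ) - L ≤ ε * L) :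
    (#((Icc 1 N ∩ window K i) \ block K L N i) : ℝ) ≤ ε * #(Icc 1 N ∩ window K i) := by
  rcases ((Icc 1 N ∩ window K i) \ block K L N i).eq_empty_or_nonempty with hempty | ⟨n, hn⟩
  · rw [hempty, card_empty, Nat.cast_zero]
    positivity
  rw [mem_sdiff, mem_inter, mem_Icc, window, mem_Ioc, mem_block] at hn
  have hfull : L = #(block K L N i) := by
    rw [block, blockStart, blockEnd, Nat.card_Ico]
    omega
  calc (#((Icc 1 N ∩ window K i) \ block K L N i) : ℝ)
      = #(Icc 1 N ∩ window K i) - #(block K L N i) :=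
        cast_card_sdiff (block_subset_window hLK)
    _ ≤ K - L := by
        rw [← hfull]
        gcongr
        exact (card_le_card inter_subset_right).trans_eq (by simp [window])
    _ ≤ ε * L := hgap
    _ ≤ ε * #(Icc 1 N ∩ window K i) := by
        gcongr
        exact hfull.trans_le (card_le_card (block_subset_window hLK))

lemma card_inter_block_le {ε : ℝ} (hε : 0 ≤ ε) (hLK : L ≤ K) {s t : Finset ℕ}
    (h : Disjoint (block K L N i) t → (#(s ∩ block K L N i) : ℝ) ≤ ε * #(block K L N i)) :
    (#(s ∩ block K L N i) : ℝ) ≤ ε * #(Icc 1 N ∩ window K i) + L * #(t ∩ window K i) := by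
  have hsub : block K L N i ⊆ Icc 1 N ∩ window K i := block_subset_window hLK
  by_cases hdisj : Disjoint (block K L N i) t
  · calc (#(s ∩ block K L N i) : ℝ) ≤ ε * #(block K L N i) := h hdisj
      _ ≤ ε * #(Icc 1 N ∩ window K i) := by gcongr
      _ ≤ _ := le_add_of_nonneg_right (by positivity)
  · obtain ⟨n, hn, hnt⟩ := not_disjoint_iff.1 hdisj
    have hpos : 0 < #(t ∩ window K i) :=
      card_pos.2 ⟨n, mem_inter.2 ⟨hnt, (mem_inter.1 (hsub hn)).2⟩⟩
    calc (#(s ∩ block K L N i) : ℝ) ≤ L := by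
          exact_mod_cast (card_le_card inter_subset_right).trans card_block_le
      _ ≤ L * #(t ∩ window K i) := le_mul_of_one_le_right (by positivity) (by exact_mod_cast hpos)
      _ ≤ _ := le_add_of_nonneg_left (by positivity)

lemma card_le_of_forall_card_inter_block_le {ε : ℝ} (hε : 0 ≤ ε) (hK : 0 < K) (hLK : L ≤ K)
    (hgap : (K : ℝ) - L ≤ ε * L) {s t : Finset ℕ} (hs : s ⊆ Icc 1 N) (ht : t ⊆ Icc 1 N)
    (h : ∀ i, Disjoint (block K L N i) t →
      (#(s ∩ block K L N i) : ℝ) ≤ ε * #(block K L N i)) :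
    (#s : ℝ) ≤ 2 * ε * N + L * #t := by
  have hwindow : ∀ i, (#(s ∩ window K i) : ℝ) ≤
      2 * ε * #(Icc 1 N ∩ window K i) + L * #(t ∩ window K i) := by
    intro i
    have hcover : s ∩ window K i ⊆
        s ∩ block K L N i ∪ (Icc 1 N ∩ window K i) \ block K L N i := by
      intro n hn
      have hnN := @hs n
      simp only [mem_inter, mem_union, mem_sdiff] at hn ⊢
      tauto
    have hcard : (#(s ∩ window K i) : ℝ) ≤
        #(s ∩ block K L N i) + #((Icc 1 N ∩ window K i) \ block K L N i) := by
      exact_mod_cast (card_le_card hcover).trans (card_union_le _ _)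
    linarith [card_inter_block_le hε hLK (h i),
      card_window_sdiff_block_le (N := N) (i := i) hε hLK hgap]
  have hN : ∑ i ∈ range N, (#(Icc 1 N ∩ window K i) : ℝ) = N := by
    rw [← Nat.cast_sum, ← card_eq_sum_card_inter_window hK Subset.rfl, Nat.card_Icc,
      Nat.add_sub_cancel]
  calc (#s : ℝ) = ∑ i ∈ range N, (#(s ∩ window K i) : ℝ) := by
        exact_mod_cast card_eq_sum_card_inter_window hK hs
    _ ≤ ∑ i ∈ range N, (2 * ε * #(Icc 1 N ∩ window K i) + L * #(t ∩ window K i)) :=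
        sum_le_sum fun i _ => hwindow i
    _ = 2 * ε * N + L * #t := by
        rw [sum_add_distrib, ← mul_sum, ← mul_sum, hN, card_eq_sum_card_inter_window hK ht,
          Nat.cast_sum]

lemma blockStart_lt_blockEnd (hL : 0 < L) (hi : i * K < N) : blockStart K i < blockEnd K L N i := by
  rw [blockStart, blockEnd]
  omega

lemma mSpacedSpec_blocks {M r : ℕ} (hL : 0 < L) (hK : L + M < K) (hr : ∀ i < r, i * K < N) :
    MSpacedSpec M r (blockStart K) (blockEnd K L N) := by
  refine ⟨fun i hi => blockStart_lt_blockEnd hL (hr i hi), fun i _ => ?_⟩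
  rw [blockStart, blockEnd, add_one_mul]
  omega

end Counting

section Shadowing

open Finset

lemma exists_dist_iterate_lt_of_uniformContinuous {X : Type*} [PseudoMetricSpace X] {T : X → X}
    (hT : UniformContinuous T) (L : ℕ) {η : ℝ} (hη : 0 < η) :
    ∃ δ > 0, ∀ (x : ℕ → X) (z : X), dist (x 0) z < δ → ∀ j ≤ L,
      (∀ k < j, dist (T (x k)) (x (k + 1)) < δ) → dist (x j) (T^[j] z) < η := by
  induction L generalizing η with
  | zero =>
    refine ⟨η, hη, fun x z hz j hj _ => ?_⟩
    rwa [Nat.le_zero.1 hj]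
  | succ L ih =>
    obtain ⟨ρ, hρ, hTρ⟩ := Metric.uniformContinuous_iff.1 hT (η / 2) (half_pos hη)
    obtain ⟨δ, hδ, hshadow⟩ := ih hρ
    refine ⟨min η (min δ (η / 2)), by positivity, fun x z hz j hj hx => ?_⟩
    simp only [lt_min_iff] at hz hx
    cases j with
    | zero => exact hz.1
    | succ j =>
      have hdist : dist (x j) (T^[j] z) < ρ :=
        hshadow x z hz.2.1 j (by omega) fun k hk => (hx k (by omega)).2.1
      rw [Function.iterate_succ_apply']
      calc dist (x (j + 1)) (T (T^[j] z))
          ≤ dist (T (x j)) (x (j + 1)) + dist (T (x j)) (T (T^[j] z)) := dist_triangle_left _ _ _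
        _ < η / 2 + η / 2 := add_lt_add (hx j j.lt_succ_self).2.2 (hTρ hdist)
        _ = η := add_halves η

lemma exists_orbit_dist_lt_of_denseRange {X : Type*} [PseudoMetricSpace X] {T : X → X}
    (hT : UniformContinuous T) (hdense : ∀ a, DenseRange T^[a]) (L : ℕ) {η : ℝ} (hη : 0 < η) :
    ∃ δ > 0, ∀ (x : ℕ → X) (a : ℕ), ∃ w, ∀ n, a ≤ n → n ≤ a + L →
      (∀ k, a ≤ k → k < n → dist (T (x k)) (x (k + 1)) < δ) → dist (x n) (T^[n] w) < η := by
  obtain ⟨δ, hδ, hshadow⟩ := exists_dist_iterate_lt_of_uniformContinuous hT L hη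
  refine ⟨δ, hδ, fun x a => ?_⟩
  obtain ⟨w, hw⟩ := (hdense a).exists_dist_lt (x a) hδ
  refine ⟨w, fun n han hnL hx => ?_⟩
  obtain ⟨j, rfl⟩ := Nat.exists_eq_add_of_le han
  rw [add_comm a j, Function.iterate_add_apply, add_comm j a]
  exact hshadow (fun k => x (a + k)) (T^[a] w) hw j (by omega)
    fun k hk => hx (a + k) (by omega) (by omega)

variable {X : Type*} [MetricSpace X] {T : X → X} {N : ℕ} {x : ℕ → X} {y : X}

/-- The times at which a `δ`-partial pseudo-orbit `x 1, …, x N` fails to follow `T` up to `δ`. -/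
noncomputable def jumpTimes (T : X → X) (δ : ℝ) (N : ℕ) (x : ℕ → X) : Finset ℕ :=
  {n ∈ Icc 1 (N - 1) | δ ≤ dist (T (x n)) (x (n + 1))}

lemma jumpTimes_subset_Icc {δ : ℝ} : jumpTimes T δ N x ⊆ Icc 1 N :=
  (filter_subset _ _).trans (Icc_subset_Icc_right (Nat.sub_le N 1))

/-- The times at which the orbit of `y` fails to trace `x 1, …, x N` up to `ε`. -/
noncomputable def missedTimes (T : X → X) (ε : ℝ) (N : ℕ) (x : ℕ → X) (y : X) : Finset ℕ :=
  {n ∈ Icc 1 N | ε ≤ dist (x n) (T^[n] y)}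

lemma missedTimes_subset_Icc {ε : ℝ} : missedTimes T ε N x y ⊆ Icc 1 N :=
  filter_subset _ _

lemma PartialPseudoOrbit.card_jumpTimes_le {δ : ℝ} (hδ : 0 ≤ δ) (h : PartialPseudoOrbit T δ N x) :
    (#(jumpTimes T δ N x) : ℝ) ≤ δ * N := by
  rcases h with rfl | ⟨hN, h⟩
  · simpa [jumpTimes] using hδ
  have hcard : ((#(Icc 1 (N - 1)) : ℕ) : ℝ) = N - 1 := by
    rw [Nat.card_Icc, Nat.add_sub_cancel, Nat.cast_pred (by omega)]
  have hlt := one_sub_mul_card_lt_ncard_iff (Icc 1 (N - 1))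
    (fun n => dist (T (x n)) (x (n + 1)) < δ) δ
  simp only [hcard, mem_Icc, and_assoc, not_lt] at hlt
  calc (#(jumpTimes T δ N x) : ℝ) ≤ δ * (N - 1) := (hlt.1 h).le
    _ ≤ δ * N := by gcongr; exact sub_le_self _ zero_le_one

lemma seqPartiallyTraced_iff_card_missedTimes_lt {ε : ℝ} :
    SeqPartiallyTraced T ε N x y ↔ (#(missedTimes T ε N x y) : ℝ) < ε * N := by
  have hlt := one_sub_mul_card_lt_ncard_iff (Icc 1 N) (fun n => dist (x n) (T^[n] y) < ε) ε
  simpa only [SeqPartiallyTraced, missedTimes, Nat.card_Icc, Nat.add_sub_cancel, mem_Icc, and_assoc,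
    not_lt] using hlt

lemma PartiallyTraces.card_missedTimes_inter_Ico_le {ε η : ℝ} {r : ℕ} {a b : ℕ → ℕ} {w : ℕ → X}
    (h : PartiallyTraces T ε r a b w y) {i : ℕ} (hi : i < r) (hab : a i ≤ b i) (hη : 2 * ε ≤ η)
    (hw : ∀ n ∈ Ico (a i) (b i), dist (x n) (T^[n] (w i)) < ε) :
    (#(missedTimes T η N x y ∩ Ico (a i) (b i)) : ℝ) ≤ ε * #(Ico (a i) (b i)) := by
  have hsub : missedTimes T η N x y ∩ Ico (a i) (b i) ⊆
      {n ∈ Ico (a i) (b i) | ¬ dist (T^[n] (w i)) (T^[n] y) < ε} := by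
    intro n hn
    obtain ⟨hmiss, hn⟩ := mem_inter.1 hn
    refine mem_filter.2 ⟨hn, fun hlt => ?_⟩
    linarith [(mem_filter.1 hmiss).2, hw n hn,
      dist_triangle (x n) (T^[n] (w i)) (T^[n] y)]
  have hcard : ((#(Ico (a i) (b i)) : ℕ) : ℝ) = b i - a i := by
    rw [Nat.card_Ico, Nat.cast_sub hab]
  have hlt := one_sub_mul_card_lt_ncard_iff (Ico (a i) (b i))
    (fun n => dist (T^[n] (w i)) (T^[n] y) < ε) ε
  simp only [hcard, mem_Ico, and_assoc] at hlt
  rw [hcard]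
  exact (Nat.cast_le.2 (card_le_card hsub)).trans (hlt.1 (h i hi)).le

lemma PartialSpecWithPeriods.exists_partiallyTraces {P : Set ℕ} (h : PartialSpecWithPeriods T P)
    (hP : P.Infinite) {ε : ℝ} (hε : 0 < ε) :
    ∃ M : ℕ, ∀ r : ℕ, 0 < r → ∀ (a b : ℕ → ℕ) (x : ℕ → X), MSpacedSpec M r a b →
      ∀ k : ℕ, ∃ n ≥ k, ∃ y : X, T^[n] y = y ∧ PartiallyTraces T ε r a b x y := by
  obtain ⟨N, M, hNM⟩ := h ε hε
  refine ⟨M, fun r hr a b x hspaced k => ?_⟩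
  obtain ⟨n, hnP, hn⟩ := hP.exists_gt (max (max N k) ⌈(1 + ε) * (b (r - 1) : ℝ)⌉₊)
  simp only [max_lt_iff] at hn
  exact ⟨n, hn.1.2.le, hNM r hr a b x hspaced n hnP hn.1.1.le (Nat.lt_of_ceil_lt hn.2).le⟩

lemma PartialSpecWithPeriods.denseRange_iterate {P : Set ℕ} (h : PartialSpecWithPeriods T P)
    (hP : P.Infinite) (k : ℕ) : DenseRange T^[k] := by
  refine Metric.denseRange_iff.2 fun x ρ hρ => ?_
  obtain ⟨M, hM⟩ := h.exists_partiallyTraces hP (lt_min hρ one_pos)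
  obtain ⟨n, hkn, y, hper, htrace⟩ := hM 1 one_pos (fun _ => 0) (fun _ => 1) (fun _ => x)
    ⟨fun _ _ => one_pos, fun i hi => by omega⟩ k
  have hmiss := htrace 0 one_pos
  have hpos : 0 < {m : ℕ | 0 ≤ m ∧ m < 1 ∧ dist (T^[m] x) (T^[m] y) < min ρ 1}.ncard := by
    have hnonneg : 0 ≤ (1 - min ρ 1) * (((1 : ℕ) : ℝ) - (0 : ℕ)) := by simp
    exact_mod_cast hnonneg.trans_lt hmiss
  obtain ⟨m, -, hm, hdist⟩ := Set.nonempty_of_ncard_ne_zero hpos.ne'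
  obtain rfl : m = 0 := Nat.lt_one_iff.1 hm
  refine ⟨T^[n - k] y, ?_⟩
  rw [← Function.iterate_add_apply, Nat.add_sub_cancel' hkn, hper]
  exact hdist.trans_le (min_le_left _ _)

lemma PartialSpecWithPeriods.exists_tracing_blocks {P : Set ℕ} (h : PartialSpecWithPeriods T P)
    (hT : UniformContinuous T) (hP : P.Infinite) {ε η : ℝ} (hε : 0 < ε) (hη : 2 * ε ≤ η) :
    ∃ M : ℕ, ∀ L > 0, ∃ δ₀ > 0, ∀ δ ≤ δ₀, ∀ K > L + M, ∀ N > 0, ∀ x : ℕ → X, ∃ y : X, ∀ i,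
      Disjoint (block K L N i) (jumpTimes T δ N x) →
        (#(missedTimes T η N x y ∩ block K L N i) : ℝ) ≤ ε * #(block K L N i) := by
  obtain ⟨M, hM⟩ := h.exists_partiallyTraces hP hε
  refine ⟨M, fun L hL => ?_⟩
  obtain ⟨δ₀, hδ₀, horbit⟩ := exists_orbit_dist_lt_of_denseRange hT (h.denseRange_iterate hP) L hε
  refine ⟨δ₀, hδ₀, fun δ hδ K hK N hN x => ?_⟩
  choose w hw using fun i => horbit x (blockStart K i)
  have hr : ∀ i, i < (N - 1) / K + 1 ↔ i * K < N := fun i => by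
    rw [Nat.lt_succ_iff, Nat.le_div_iff_mul_le (by omega)]
    omega
  obtain ⟨-, -, y, -, hy⟩ := hM ((N - 1) / K + 1) (Nat.succ_pos _) (blockStart K)
    (blockEnd K L N) w (mSpacedSpec_blocks hL hK fun i => (hr i).1) 0
  refine ⟨y, fun i hdisj => ?_⟩
  rcases (block K L N i).eq_empty_or_nonempty with hempty | ⟨m, hm⟩
  · simp [hempty]
  have hi : i * K < N := by
    rw [mem_block] at hm
    omega
  refine hy.card_missedTimes_inter_Ico_le ((hr i).2 hi) (blockStart_lt_blockEnd hL hi).le hη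
    fun n hn => ?_
  obtain ⟨hin, hnL, hnN⟩ := mem_block.1 hn
  refine hw i n hin (by rw [blockStart]; omega) fun k hk hkn => ?_
  by_contra! hjump
  rw [blockStart] at hk
  exact disjoint_left.1 hdisj (mem_block.2 (by omega))
    (mem_filter.2 ⟨mem_Icc.2 (by omega), hδ.trans hjump⟩)

/-- The partial shadowing property: every finite `δ`-partial pseudo-orbit is `ε`-partially traced by
some point, where `δ` depends only on `ε`. -/
def PartialShadowing (T : X → X) : Prop :=
  ∀ ε : ℝ, 0 < ε → ∃ δ : ℝ, 0 < δ ∧ ∀ N : ℕ, 0 < N → ∀ x : ℕ → X,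
    PartialPseudoOrbit T δ N x → ∃ y : X, SeqPartiallyTraced T ε N x y

theorem partial_shadowing_of_partialSpec_general {P : Set ℕ} (hT : UniformContinuous T)
    (hP : P.Infinite) (hspec : PartialSpecWithPeriods T P) : PartialShadowing T := by
  intro η hη
  obtain ⟨ε, hε, rfl⟩ : ∃ ε > 0, η = 4 * ε := ⟨η / 4, by positivity, by ring⟩
  obtain ⟨M, htrace⟩ := hspec.exists_tracing_blocks hT hP (η := 4 * ε) hε (by linarith)
  obtain ⟨L, hL⟩ := exists_nat_gt ((M + 1) / ε)
  have hLpos : (0 : ℝ) < L := lt_trans (by positivity) hL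
  have hgap : (M : ℝ) + 1 ≤ ε * L := ((div_lt_iff₀' hε).1 hL).le
  obtain ⟨δ₀, hδ₀, htrace⟩ := htrace L (Nat.cast_pos.1 hLpos)
  refine ⟨min δ₀ (ε / L), by positivity, fun N hN x hx => ?_⟩
  set δ := min δ₀ (ε / L)
  have hδL : L * δ ≤ ε := (le_div_iff₀' hLpos).1 (min_le_right _ _)
  obtain ⟨y, hy⟩ := htrace δ (min_le_left _ _) (L + M + 1) (Nat.lt_succ_self _) N hN x
  refine ⟨y, seqPartiallyTraced_iff_card_missedTimes_lt.2 ?_⟩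
  calc (#(missedTimes T (4 * ε) N x y) : ℝ)
      ≤ 2 * ε * N + L * #(jumpTimes T δ N x) :=
        card_le_of_forall_card_inter_block_le hε.le (Nat.succ_pos _) (by omega)
          (by push_cast; linarith) missedTimes_subset_Icc jumpTimes_subset_Icc hy
    _ ≤ 2 * ε * N + L * (δ * N) := by gcongr; exact hx.card_jumpTimes_le (by positivity)
    _ ≤ 2 * ε * N + ε * N := by rw [← mul_assoc]; gcongr
    _ < 4 * ε * N := by linarith [mul_pos hε (Nat.cast_pos (α := ℝ).2 hN)]

end Shadowing

/-- Partial specification (with some set of periods with bounded gaps) implies partial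
shadowing. -/
theorem partial_shadowing_of_partialSpec
    {X : Type*} [MetricSpace X] [CompactSpace X] (T : X ≃ₜ X)
    (P : Set ℕ) (hP : BoundedGaps P) (hspec : PartialSpecWithPeriods ⇑T P) :
    ∀ ε : ℝ, 0 < ε → ∃ δ : ℝ, 0 < δ ∧ ∀ N : ℕ, 0 < N → ∀ x : ℕ → X,
      PartialPseudoOrbit ⇑T δ N x → ∃ y : X, SeqPartiallyTraced ⇑T ε N x y :=
  partial_shadowing_of_partialSpec_general
    (CompactSpace.uniformContinuous_of_continuous T.continuous) hP.1 hspec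
end

section
/- Let G be an abelian group (written multiplicatively) equipped with a G-invariant metric d_G, and let g₁,…,g_r ∈ G be elements of infinite order. Then for every c ∈ ℕ there exists a subset P ⊆ {cn : n ∈ ℕ} with bounded gaps such that inf { d_G(g_iⁿ, 1) : 1 ≤ i ≤ r, n ∈ P } > 0. -/
open MeasureTheory Topology

/-!
Left multiplication by `gᵢ` is an isometry carrying `1` to `gᵢⁿ` after `n` steps, so only the
orbits of `r` isometries matter, and passing to `c`-th iterates reduces to `c = 1`. If an orbit is
`ε`-close to its starting point at times `a < b`, then it is `2ε`-close to it at time `b - a`.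
Choosing `ε` so small that no orbit comes `2ε`-close during the first `r` steps, each isometry has
at most one `ε`-close return among any `r + 1` consecutive times, and by pigeonhole one of these
times is a close return of none of them.
-/

section BoundedGaps

variable {P : Set ℕ}

theorem boundedGaps_of_forall_exists_mem_Ioc {B : ℕ}
    (h : ∀ n, ∃ k ∈ Set.Ioc n (n + B), k ∈ P) : BoundedGaps P := by
  refine ⟨Set.infinite_of_forall_exists_gt fun n => ?_, B, fun n _ => ?_⟩
  · obtain ⟨k, hk, hkP⟩ := h n
    exact ⟨k, hkP, hk.1⟩
  · obtain ⟨k, hk, hkP⟩ := h n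
    exact ⟨k, hkP, hk⟩

theorem BoundedGaps.image_mul_left (hP : BoundedGaps P) {c : ℕ} (hc : 0 < c) :
    BoundedGaps ((c * ·) '' P) := by
  obtain ⟨hinf, B, hB⟩ := hP
  refine ⟨hinf.image (mul_right_injective₀ hc.ne').injOn, c * B, ?_⟩
  rintro _ ⟨n, hn, rfl⟩
  obtain ⟨m, hm, hlt, hle⟩ := hB n hn
  refine ⟨c * m, Set.mem_image_of_mem _ hm, Nat.mul_lt_mul_of_pos_left hlt hc, ?_⟩
  calc c * m ≤ c * (n + B) := Nat.mul_le_mul_left c hle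
    _ = c * n + c * B := Nat.mul_add c n B

end BoundedGaps

theorem exists_mem_Ioc_forall_notMem_of_sparse {ι : Type*} [Finite ι] {S : ι → Set ℕ}
    (hS : ∀ i, ∀ a ∈ S i, ∀ b ∈ S i, a < b → a + Nat.card ι < b) (n : ℕ) :
    ∃ k ∈ Set.Ioc n (n + (Nat.card ι + 1)), ∀ i, k ∉ S i := by
  by_contra! hcover
  choose i hi using fun k : Set.Ioc n (n + (Nat.card ι + 1)) => hcover k k.2
  have hinj : Function.Injective i := by
    refine .of_lt_imp_ne fun a b hab heq => ?_
    have hgap := hS (i b) a (heq ▸ hi a) b (hi b) hab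
    have ha : n < a := a.2.1
    have hb : b ≤ n + (Nat.card ι + 1) := b.2.2
    omega
  have hcard := Nat.card_le_card_of_injective i hinj
  simp at hcard

section Isometry

variable {X : Type*} [PseudoMetricSpace X] {f : X → X}

theorem isometry_iterate (hf : Isometry f) : ∀ n : ℕ, Isometry f^[n]
  | 0 => isometry_id
  | n + 1 => (isometry_iterate hf n).comp hf

theorem dist_iterate_self_le_add (hf : Isometry f) (x : X) (m n : ℕ) :
    dist (f^[n] x) x ≤ dist (f^[m + n] x) x + dist (f^[m] x) x :=
  calc dist (f^[n] x) x = dist (f^[m + n] x) (f^[m] x) := by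
        rw [Function.iterate_add_apply, (isometry_iterate hf m).dist_eq]
    _ ≤ dist (f^[m + n] x) x + dist (f^[m] x) x := dist_triangle_right _ _ _

theorem add_lt_of_dist_iterate_self_lt (hf : Isometry f) {x : X} {ε : ℝ} {N : ℕ}
    (hN : ∀ n ∈ Set.Ioc 0 N, 2 * ε ≤ dist (f^[n] x) x) {a b : ℕ} (hab : a < b)
    (ha : dist (f^[a] x) x < ε) (hb : dist (f^[b] x) x < ε) : a + N < b := by
  obtain ⟨n, rfl⟩ := Nat.exists_eq_add_of_le hab.le
  by_contra! hle
  have hfar := hN n ⟨by omega, by omega⟩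
  have hnear := dist_iterate_self_le_add hf x a n
  linarith

end Isometry

section Family

variable {ι : Type*} [Finite ι] {X : ι → Type*} [∀ i, PseudoMetricSpace (X i)]
  {f : ∀ i, X i → X i} {x : ∀ i, X i}

theorem exists_pos_forall_mem_Ioc_two_mul_le_dist_iterate
    (hx : ∀ i n, 0 < n → 0 < dist ((f i)^[n] (x i)) (x i)) (N : ℕ) :
    ∃ ε > 0, ∀ i, ∀ n ∈ Set.Ioc 0 N, 2 * ε ≤ dist ((f i)^[n] (x i)) (x i) := by
  obtain ⟨δ, hδ, hlt⟩ := Pi.exists_forall_pos_add_lt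
    fun p : ι × Set.Ioc 0 N => hx p.1 p.2 p.2.2.1
  refine ⟨δ / 2, half_pos hδ, fun i n hn => ?_⟩
  linarith [hlt (i, ⟨n, hn⟩)]

theorem exists_pos_boundedGaps_le_dist_iterate (hf : ∀ i, Isometry (f i))
    (hx : ∀ i n, 0 < n → 0 < dist ((f i)^[n] (x i)) (x i)) :
    ∃ ε > 0, BoundedGaps {n | 0 < n ∧ ∀ i, ε ≤ dist ((f i)^[n] (x i)) (x i)} := by
  obtain ⟨ε, hε, hfar⟩ := exists_pos_forall_mem_Ioc_two_mul_le_dist_iterate hx (Nat.card ι)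
  refine ⟨ε, hε, boundedGaps_of_forall_exists_mem_Ioc (B := Nat.card ι + 1) fun n => ?_⟩
  obtain ⟨k, hk, hgood⟩ := exists_mem_Ioc_forall_notMem_of_sparse
    (S := fun i => {k | dist ((f i)^[k] (x i)) (x i) < ε})
    (fun i _ ha _ hb hab => add_lt_of_dist_iterate_self_lt (hf i) (hfar i) hab ha hb) n
  exact ⟨k, hk, Nat.zero_lt_of_lt hk.1, fun i => not_lt.1 (hgood i)⟩

theorem exists_bounded_gaps_powers_away_from_one_general (hf : ∀ i, Isometry (f i))
    (hx : ∀ i n, 0 < n → 0 < dist ((f i)^[n] (x i)) (x i)) {c : ℕ} (hc : 0 < c) :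
    ∃ P : Set ℕ, P ⊆ {m | ∃ n : ℕ, 0 < n ∧ m = c * n} ∧ BoundedGaps P ∧
      ∃ ε : ℝ, 0 < ε ∧ ∀ i, ∀ n ∈ P, ε ≤ dist ((f i)^[n] (x i)) (x i) := by
  have hxc : ∀ i n, 0 < n → 0 < dist (((f i)^[c])^[n] (x i)) (x i) := fun i n hn => by
    rw [← Function.iterate_mul]
    exact hx i (c * n) (Nat.mul_pos hc hn)
  obtain ⟨ε, hε, hgaps⟩ :=
    exists_pos_boundedGaps_le_dist_iterate (fun i => isometry_iterate (hf i) c) hxc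
  refine ⟨_, ?_, hgaps.image_mul_left hc, ε, hε, ?_⟩
  · rintro _ ⟨n, ⟨hn, -⟩, rfl⟩
    exact ⟨n, hn, rfl⟩
  · rintro i _ ⟨n, ⟨-, hle⟩, rfl⟩
    simpa only [Function.iterate_mul] using hle i

end Family

/-- In an abelian group with an invariant metric, given finitely many elements of infinite
order, for every `c` there is a set `P ⊆ cℕ` with bounded gaps on which all the powers
`gᵢⁿ`, `n ∈ P`, stay uniformly away from the identity. -/
theorem exists_bounded_gaps_powers_away_from_one
    {G : Type*} [CommGroup G] [MetricSpace G]
    (hinv : ∀ g x y : G, dist (g * x) (g * y) = dist x y)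
    (r : ℕ) (g : Fin r → G) (hord : ∀ i : Fin r, ∀ n : ℕ, 0 < n → g i ^ n ≠ 1)
    (c : ℕ) (hc : 0 < c) :
    ∃ P : Set ℕ, P ⊆ {m | ∃ n : ℕ, 0 < n ∧ m = c * n} ∧ BoundedGaps P ∧
      ∃ ε : ℝ, 0 < ε ∧ ∀ i : Fin r, ∀ n ∈ P, ε ≤ dist (g i ^ n) 1 := by
  simpa only [mul_left_iterate, mul_one] using
    exists_bounded_gaps_powers_away_from_one_general (f := fun i y => g i * y) (x := fun _ => 1)
      (fun i => Isometry.of_dist_eq (hinv (g i)))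
      (fun i n hn => by simpa [mul_left_iterate] using hord i n hn) hc
end

section
/- Let d ∈ ℕ, let U ∈ GL_d(ℤ) be a unipotent matrix, and let μ be an ergodic U-invariant Borel probability measure on the torus 𝕋^d = ℝ^d/ℤ^d (with U acting as the induced automorphism). Then there exist m ∈ ℕ, a point a ∈ 𝕋^d, and a closed connected proper subgroup H ≤ 𝕋^d such that the support of μ equals the union ⋃_{i=0}^{m−1} (Uⁱa + H), and for each i the restriction of μ to Uⁱa + H is a translate of the Haar measure on H normalized to total mass μ(Uⁱa + H). -/
open MeasureTheory Topology Pointwise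

/-- The `d`-dimensional torus `ℝ^d/ℤ^d`. -/
abbrev Torus (d : ℕ) := Fin d → AddCircle (1 : ℝ)

/-- The automorphism of the torus induced by an integer matrix. -/
noncomputable def toralAuto {d : ℕ} (U : Matrix (Fin d) (Fin d) ℤ) : Torus d → Torus d :=
  fun x i => ∑ j, U i j • x j

/-- The support of a measure: the set of points all of whose open neighbourhoods have
positive measure. -/
def msupport {X : Type*} [TopologicalSpace X] [MeasurableSpace X] (μ : Measure X) : Set X :=
  {x : X | ∀ O : Set X, IsOpen O → x ∈ O → 0 < μ O}

/-
Call a character of the torus virtually constant if some positive multiple of it is `μ`-almost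
everywhere constant. These characters form a subgroup `Γ` of `ℤ^d` with torsion-free quotient, so
`Γ` is a direct summand and its annihilator `H` is connected; `H` is proper because `Γ` contains
the nonzero invariant characters, which exist by unipotency. A finite generating set of `Γ` takes
finitely many values almost everywhere, so some coset of `H` is charged, and by ergodicity its
orbit is a finite cycle of cosets carrying `μ`.

It remains to see that `μ` is `H`-invariant, that is, that `∫ χ dμ = 0` for `χ ∉ Γ`. Write `f`
for the dual automorphism. If `f χ - χ ∈ Γ`, then for some `N ≠ 0` the character `f ^ N χ - χ` is
almost everywhere a constant `c ∈ ℝ/ℤ`, and invariance of `μ` gives `∫ χ = e^{2πic} ∫ χ`; here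
`c ≠ 0`, as otherwise the sum of `χ` over its orbit would be invariant and `χ` virtually constant.
If `f χ - χ ∉ Γ`, then no `f ^ n χ - χ` with `n ≠ 0` lies in `Γ`, so by induction on the order of
unipotency these have integral zero; the orbit of `χ` is thus orthonormal in `L²(μ)`, and
Bessel's inequality makes its constant inner product with `1` vanish.
-/

section Unipotent

variable {R M : Type*} [Ring R] [AddCommGroup M] [Module R M] {f : Module.End R M}
  {p : Submodule R M}

theorem mem_of_nsmul_mem_of_isAddTorsionFree_quotient [IsAddTorsionFree (M ⧸ p)] {n : ℕ}
    (hn : n ≠ 0) {v : M} (hv : n • v ∈ p) : v ∈ p := by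
  rw [← Submodule.Quotient.mk_eq_zero] at hv ⊢
  exact (nsmul_eq_zero_iff_right hn).1 hv

theorem isAddTorsionFree_quotient_of_forall_nsmul_mem
    (h : ∀ n : ℕ, n ≠ 0 → ∀ v, n • v ∈ p → v ∈ p) : IsAddTorsionFree (M ⧸ p) := by
  refine ⟨fun n hn => ?_⟩
  rintro ⟨v⟩ ⟨w⟩ hvw
  refine (Submodule.Quotient.eq p).2 (h n hn _ ?_)
  rw [nsmul_sub]
  exact (Submodule.Quotient.eq p).1 hvw

theorem pow_apply_sub_nsmul_mem (hp : p ≤ p.comap f) {v w : M} (hv : f v - v - w ∈ p)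
    (hw : f w - w ∈ p) (j : ℕ) : (f ^ j) v - v - j • w ∈ p := by
  induction j with
  | zero => simp
  | succ j ih =>
    have : (f ^ (j + 1)) v - v - (j + 1) • w =
        f ((f ^ j) v - v - j • w) + (f v - v - w) + j • (f w - w) := by
      rw [pow_succ']
      simp only [Module.End.mul_apply, map_sub, map_nsmul, nsmul_sub, add_smul, one_smul]
      abel
    rw [this]
    exact add_mem (add_mem (hp ih) hv) (nsmul_mem hw j)

theorem pow_apply_sub_mem (hp : p ≤ p.comap f) {v : M} (hv : f v - v ∈ p) (j : ℕ) :
    (f ^ j) v - v ∈ p := by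
  simpa using pow_apply_sub_nsmul_mem hp (w := 0) (by simpa using hv) (by simp) j

theorem sub_one_pow_apply_pow_apply_sub_eq_zero {k : ℕ} {v : M} (hv : ((f - 1) ^ (k + 1)) v = 0)
    (n : ℕ) : ((f - 1) ^ k) ((f ^ n) v - v) = 0 := by
  have hcomm : Commute ((f - 1) ^ k) (f ^ n - 1) :=
    ((((Commute.refl f).pow_right n).sub_left (Commute.one_left _)).pow_left k).sub_right
      (Commute.one_right _)
  have hfix : f (((f - 1) ^ k) v) - ((f - 1) ^ k) v = 0 := by
    rwa [pow_succ', Module.End.mul_apply] at hv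
  calc ((f - 1) ^ k) ((f ^ n) v - v)
      = (f ^ n) (((f - 1) ^ k) v) - ((f - 1) ^ k) v := LinearMap.congr_fun hcomm.eq v
    _ = 0 := pow_apply_sub_mem (p := ⊥) bot_le hfix n

/- Modulo `p`, the increment `w = f v - v` is again periodic, hence fixed by induction on the
order of unipotency; so `f ^ n` moves `v` by `n • w`, and `w` vanishes by torsion-freeness. -/
theorem apply_sub_mem_of_pow_apply_sub_mem [IsAddTorsionFree (M ⧸ p)] (hp : p ≤ p.comap f)
    {k n : ℕ} (hn : n ≠ 0) {v : M} (hk : ((f - 1) ^ k) v ∈ p) (hv : (f ^ n) v - v ∈ p) :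
    f v - v ∈ p := by
  induction k generalizing v with
  | zero => exact sub_mem (hp hk) hk
  | succ k ih =>
    set w := f v - v with hw
    have hw_fixed : f w - w ∈ p := by
      refine ih (by rwa [pow_succ, Module.End.mul_apply] at hk) ?_
      have : (f ^ n) w - w = f ((f ^ n) v - v) - ((f ^ n) v - v) := by
        have hcomm : (f ^ n) (f v) = f ((f ^ n) v) := by
          rw [← Module.End.mul_apply, ← pow_succ, pow_succ', Module.End.mul_apply]
        rw [hw, map_sub, map_sub, hcomm]
        abel
      rw [this]
      exact sub_mem (hp hv) hv
    refine mem_of_nsmul_mem_of_isAddTorsionFree_quotient hn ?_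
    have := sub_mem hv (pow_apply_sub_nsmul_mem hp (v := v) (by simp [hw]) hw_fixed n)
    rwa [sub_sub_cancel] at this

theorem exists_ne_zero_apply_eq_zero_of_isNilpotent [Nontrivial M] (hf : IsNilpotent f) :
    ∃ v ≠ 0, f v = 0 := by
  by_contra! h
  obtain ⟨k, hk⟩ := hf
  have hinj : Function.Injective (f ^ k) := by
    rw [Module.End.coe_pow]
    exact ((injective_iff_map_eq_zero f).2 fun v hv => by_contra fun hv0 => h v hv0 hv).iterate k
  obtain ⟨v, hv⟩ := exists_ne (0 : M)
  exact hv (hinj (by simp [hk]))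

end Unipotent

section Cosets

variable {G : Type*} [AddGroup G] {T : G →+ G} {H : AddSubgroup G}

theorem iterate_mem_vadd (hT : H ≤ H.comap T) {a x : G} (hx : x ∈ a +ᵥ (H : Set G)) (k : ℕ) :
    T^[k] x ∈ T^[k] a +ᵥ (H : Set G) := by
  rw [mem_leftAddCoset_iff] at hx ⊢
  rw [← iterate_map_neg, ← iterate_map_add]
  exact Set.MapsTo.iterate (s := (H : Set G)) hT k hx

theorem iterate_mem_vadd_self_of_mem_vadd (hT : H ≤ H.comap T) {m i : ℕ} {a x : G}
    (ha : T^[m] a ∈ a +ᵥ (H : Set G)) (hx : x ∈ T^[i] a +ᵥ (H : Set G)) :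
    T^[m] x ∈ x +ᵥ (H : Set G) := by
  have hTx : T^[m] x ∈ T^[i] (T^[m] a) +ᵥ (H : Set G) := by
    rw [Function.Commute.iterate_iterate_self]
    exact iterate_mem_vadd hT hx m
  have hTa : T^[i] (T^[m] a) ∈ T^[i] a +ᵥ (H : Set G) := iterate_mem_vadd hT ha i
  rw [mem_leftAddCoset_iff] at *
  have := H.add_mem (H.add_mem (H.neg_mem hx) hTa) hTx
  simpa [add_assoc] using this

variable [MeasurableSpace G] {μ : Measure G}

theorem measure_iterate_vadd_ne_zero (hT : H ≤ H.comap T) (hμ : MeasurePreserving T μ μ)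
    {a : G} (ha : μ (a +ᵥ (H : Set G)) ≠ 0) (i : ℕ) : μ (T^[i] a +ᵥ (H : Set G)) ≠ 0 :=
  fun h => ha <| measure_mono_null (fun _ hx => iterate_mem_vadd hT hx i)
    ((hμ.iterate i).quasiMeasurePreserving.preimage_null h)

variable [MeasurableAdd G]

theorem exists_iterate_mem_vadd (hT : H ≤ H.comap T) (hμ : Conservative T μ)
    (hH : MeasurableSet (H : Set G)) {a : G} (ha : μ (a +ᵥ (H : Set G)) ≠ 0) :
    ∃ m ≠ 0, T^[m] a ∈ a +ᵥ (H : Set G) := by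
  obtain ⟨x, hx, m, hm, hmx⟩ :=
    hμ.exists_mem_iterate_mem (hH.const_vadd a).nullMeasurableSet ha
  refine ⟨m, hm, ?_⟩
  have hTx := iterate_mem_vadd hT hx m
  rw [mem_leftAddCoset_iff] at *
  have := H.add_mem hmx (H.neg_mem hTx)
  simpa [add_assoc] using this

theorem ae_mem_biUnion_iterate_vadd [IsFiniteMeasure μ] (hT : H ≤ H.comap T) (hμ : Ergodic T μ)
    (hH : MeasurableSet (H : Set G)) {a : G} (ha : μ (a +ᵥ (H : Set G)) ≠ 0) {m : ℕ} (hm : m ≠ 0)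
    (hma : T^[m] a ∈ a +ᵥ (H : Set G)) :
    ∀ᵐ x ∂μ, x ∈ ⋃ i ∈ Finset.range m, (T^[i] a +ᵥ (H : Set G)) := by
  set V : Set G := ⋃ i ∈ Finset.range m, (T^[i] a +ᵥ (H : Set G)) with hV
  have hV_meas : MeasurableSet V :=
    Finset.measurableSet_biUnion _ fun i _ => hH.const_vadd (T^[i] a)
  have hV_maps : V ⊆ T ⁻¹' V := by
    intro x hx
    simp only [hV, Set.mem_preimage, Set.mem_iUnion, Finset.mem_range] at hx ⊢
    obtain ⟨i, hi, hx⟩ := hx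
    have hTx := iterate_mem_vadd hT hx 1
    rw [← Function.iterate_add_apply, add_comm] at hTx
    obtain hi' | hi' := (Nat.succ_le_of_lt hi).lt_or_eq
    · exact ⟨i + 1, hi', hTx⟩
    · refine ⟨0, Nat.pos_of_ne_zero hm, ?_⟩
      rw [show i + 1 = m from hi'] at hTx
      rwa [← (leftAddCoset_eq_iff H).2 ((mem_leftAddCoset_iff a).1 hma)] at hTx
  rcases hμ.ae_empty_or_univ_of_ae_le_preimage hV_meas.nullMeasurableSet
    (Filter.Eventually.of_forall hV_maps) with h | h
  · have hV0 : μ V = 0 := by simpa using measure_congr h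
    exact absurd (measure_mono_null
      (Set.subset_biUnion_of_mem (Finset.mem_range.2 (Nat.pos_of_ne_zero hm))) hV0) ha
  · exact Filter.eventuallyEq_univ.1 h

end Cosets

theorem exists_measure_preimage_singleton_ne_zero {X Y : Type*} [MeasurableSpace X] {μ : Measure X}
    [NeZero μ] {f : X → Y} {s : Set Y} (hs : s.Countable) (hf : ∀ᵐ x ∂μ, f x ∈ s) :
    ∃ a, μ (f ⁻¹' {f a}) ≠ 0 := by
  by_contra! h
  have hne : ∀ᵐ x ∂μ, ∀ y ∈ s, f x ≠ y := (ae_ball_iff hs).2 fun y _ => by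
    by_cases hy : ∃ a, f a = y
    · obtain ⟨a, rfl⟩ := hy
      exact measure_eq_zero_iff_ae_notMem.1 (h a)
    · exact Filter.Eventually.of_forall fun x hx => hy ⟨x, hx⟩
  obtain ⟨x, hx, hxs⟩ := (hne.and hf).exists
  exact hx (f x) hxs rfl

section Invariant

variable {G : Type*} [AddCommGroup G] [MeasurableSpace G] [MeasurableAdd₂ G] {H : AddSubgroup G}
  {μ : Measure G} [VAddInvariantMeasure H G μ] [SFinite μ]
  {ν : Measure H} [IsProbabilityMeasure ν] [ν.IsAddLeftInvariant]

theorem setLIntegral_vadd_eq (hH : MeasurableSet (H : Set G)) (b : G) {f : G → ENNReal}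
    (hf : Measurable f) :
    ∫⁻ x in b +ᵥ (H : Set G), f x ∂μ = μ (b +ᵥ (H : Set G)) * ∫⁻ h : H, f (b + h) ∂ν := by
  have : MeasurableAdd H := ⟨fun h => (measurable_subtype_coe.const_add (h : G)).subtype_mk,
    fun h => (measurable_subtype_coe.add_const (h : G)).subtype_mk⟩
  set C : Set G := b +ᵥ (H : Set G) with hC
  have hC_meas : MeasurableSet C := hH.const_vadd b
  have hshift (h : H) : ∫⁻ x in C, f (x + h) ∂μ = ∫⁻ x in C, f x ∂μ := by
    have hpre : (fun x => h +ᵥ x) ⁻¹' C = C := by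
      ext x
      simp only [hC, Set.mem_preimage, mem_leftAddCoset_iff, AddSubgroup.vadd_def, vadd_eq_add,
        SetLike.mem_coe, add_left_comm (-b), H.add_mem_cancel_left h.2]
    have := ((measurePreserving_vadd h μ).restrict_preimage hC_meas).lintegral_comp hf
    rw [hpre] at this
    simpa only [AddSubgroup.vadd_def, vadd_eq_add, add_comm] using this
  calc ∫⁻ x in C, f x ∂μ
      = ∫⁻ h : H, ∫⁻ x in C, f (x + h) ∂μ ∂ν := by simp [hshift]
    _ = ∫⁻ x in C, ∫⁻ h : H, f (x + h) ∂ν ∂μ :=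
        lintegral_lintegral_swap (by fun_prop)
    _ = ∫⁻ _ in C, ∫⁻ h : H, f (b + h) ∂ν ∂μ := by
        refine setLIntegral_congr_fun hC_meas ?_
        rintro _ ⟨g, hg, rfl⟩
        simpa [add_assoc] using lintegral_add_left_eq_self (μ := ν) (fun h : H => f (b + h)) ⟨g, hg⟩
    _ = μ C * ∫⁻ h : H, f (b + h) ∂ν := by rw [setLIntegral_const, mul_comm]

theorem restrict_vadd_eq_smul_map (hH : MeasurableSet (H : Set G)) (b : G) :
    μ.restrict (b +ᵥ (H : Set G)) =
      μ (b +ᵥ (H : Set G)) • ν.map (fun h : H => b + (h : G)) := by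
  have hb : Measurable fun h : H => b + (h : G) := by fun_prop
  refine Measure.ext_of_lintegral _ fun f hf => ?_
  rw [setLIntegral_vadd_eq (ν := ν) hH b hf, lintegral_smul_measure, lintegral_map hf hb,
    smul_eq_mul]

end Invariant

theorem exists_isAddHaarMeasure_isProbabilityMeasure (G : Type*) [AddGroup G] [TopologicalSpace G]
    [IsTopologicalAddGroup G] [CompactSpace G] [MeasurableSpace G] [BorelSpace G] :
    ∃ ν : Measure G, ν.IsAddHaarMeasure ∧ IsProbabilityMeasure ν :=
  ⟨Measure.addHaarMeasure ⊤, inferInstance, ⟨by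
    simpa using Measure.addHaarMeasure_self (K₀ := (⊤ : TopologicalSpace.PositiveCompacts G))⟩⟩

section Support

theorem msupport_eq_support {X : Type*} [TopologicalSpace X] [MeasurableSpace X] (μ : Measure X) :
    msupport μ = μ.support := by
  rw [Measure.support_eq_forall_isOpen]
  exact Set.ext fun x => forall_congr' fun O => forall_comm

theorem vadd_mem_support {G X : Type*} [AddGroup G] [TopologicalSpace X] [MeasurableSpace X]
    [AddAction G X] [ContinuousConstVAdd G X] {μ : Measure X}
    [VAddInvariantMeasure G X μ] (g : G) {x : X} (hx : x ∈ μ.support) : g +ᵥ x ∈ μ.support := by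
  rw [Measure.support_eq_forall_isOpen] at hx ⊢
  intro u hu hu_open
  rw [← measure_preimage_vadd μ g]
  exact hx _ hu (hu_open.preimage (continuous_const_vadd g))

variable {G : Type*} [AddCommGroup G] [TopologicalSpace G] [ContinuousAdd G]
  [HereditarilyLindelofSpace G] [MeasurableSpace G] {H : AddSubgroup G} {μ : Measure G}
  [VAddInvariantMeasure H G μ]

theorem vadd_subset_support {b : G} (hb : μ (b +ᵥ (H : Set G)) ≠ 0) :
    b +ᵥ (H : Set G) ⊆ μ.support := by
  obtain ⟨y, hyC, hy⟩ := Measure.nonempty_inter_support_of_pos (pos_iff_ne_zero.2 hb)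
  intro x hx
  rw [mem_leftAddCoset_iff] at hx hyC
  have hxy : x - y ∈ H := by simpa using H.sub_mem hx hyC
  simpa [AddSubgroup.vadd_def] using vadd_mem_support (⟨x - y, hxy⟩ : H) hy

theorem support_eq_biUnion_vadd {ι : Type*} (hH : IsClosed (H : Set G)) {s : Finset ι} {b : ι → G}
    (hb : ∀ i ∈ s, μ (b i +ᵥ (H : Set G)) ≠ 0)
    (hμ : ∀ᵐ x ∂μ, x ∈ ⋃ i ∈ s, (b i +ᵥ (H : Set G))) :
    μ.support = ⋃ i ∈ s, (b i +ᵥ (H : Set G)) :=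
  (Measure.support_subset_of_isClosed
    (isClosed_biUnion_finset fun i _ => hH.vadd (b i)) hμ).antisymm
    (Set.iUnion₂_subset fun i hi => vadd_subset_support (hb i hi))

end Support

section Fourier

open UnitAddTorus

theorem eq_zero_of_forall_inner_eq {𝕜 E ι : Type*} [RCLike 𝕜] [NormedAddCommGroup E]
    [InnerProductSpace 𝕜 E] [Infinite ι] {v : ι → E} (hv : Orthonormal 𝕜 v) {x : E} {c : 𝕜}
    (hc : ∀ i, inner 𝕜 (v i) x = c) : c = 0 := by
  have := hv.inner_products_summable x
  simpa [hc, summable_const_iff] using this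

variable {ι : Type*} [Fintype ι] {μ ν : Measure (UnitAddTorus ι)}

theorem ext_of_forall_integral_mFourier_eq [IsFiniteMeasure μ] [IsFiniteMeasure ν]
    (h : ∀ n, ∫ x, mFourier n x ∂μ = ∫ x, mFourier n x ∂ν) : μ = ν := by
  have hint (ρ : Measure (UnitAddTorus ι)) [IsFiniteMeasure ρ] (f : C(UnitAddTorus ι, ℂ)) :
      Integrable f ρ := (BoundedContinuousFunction.mkOfCompact f).integrable ρ
  have hspan (f : C(UnitAddTorus ι, ℂ))
      (hf : f ∈ Submodule.span ℂ (Set.range mFourier)) :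
      ∫ x, f x ∂μ = ∫ x, f x ∂ν := by
    induction hf using Submodule.span_induction with
    | mem f hf => obtain ⟨n, rfl⟩ := hf; exact h n
    | zero => simp
    | add f g _ _ hf hg =>
      simp only [ContinuousMap.add_apply]
      rw [integral_add (hint μ f) (hint μ g), integral_add (hint ν f) (hint ν g), hf, hg]
    | smul c f _ hf => simp only [ContinuousMap.smul_apply, integral_smul, hf]
  refine ext_of_forall_mem_subalgebra_integral_eq_of_polish (𝕜 := ℂ)
    (A := (mFourierSubalgebra ι).comap
      (BoundedContinuousFunction.toContinuousMapStarₐ ℂ)) ?_ fun g hg => hspan g ?_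
  · intro x y hxy
    obtain ⟨_, ⟨f, hf, rfl⟩, hne⟩ := mFourierSubalgebra_separatesPoints (d := ι) hxy
    exact ⟨_, ⟨_, ⟨BoundedContinuousFunction.mkOfCompact f, hf, rfl⟩, rfl⟩, hne⟩
  · rw [← mFourierSubalgebra_coe]
    exact hg

theorem eq_zero_of_forall_integral_mFourier_eq [IsProbabilityMeasure μ] {n : ℕ → ι → ℤ} {c : ℂ}
    (hn : ∀ i j, i < j → ∫ x, mFourier (n j - n i) x ∂μ = 0)
    (hc : ∀ i, ∫ x, mFourier (n i) x ∂μ = c) : c = 0 := by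
  let v (i : ℕ) : Lp ℂ 2 μ := ContinuousMap.toLp 2 μ ℂ (mFourier (n i))
  have hinner (i j : ℕ) : inner ℂ (v i) (v j) = ∫ x, mFourier (n j - n i) x ∂μ := by
    simp only [v, ContinuousMap.inner_toLp, sub_eq_add_neg, mFourier_add,
      mFourier_neg, starRingEnd_apply]
  have hv : Orthonormal ℂ v := by
    refine ⟨fun i => ?_, ?_⟩
    · rw [norm_eq_sqrt_re_inner (𝕜 := ℂ), hinner]
      simp [mFourier_zero]
    · have : Std.Symm fun i j => inner ℂ (v i) (v j) = 0 := ⟨fun i j => inner_eq_zero_symm.1⟩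
      exact Pairwise.of_lt fun i j hij => by rw [hinner, hn i j hij]
  refine star_eq_zero.1 (eq_zero_of_forall_inner_eq hv
    (x := ContinuousMap.toLp 2 μ ℂ (mFourier 0)) fun i => ?_)
  rw [ContinuousMap.inner_toLp, ← hc i, ← starRingEnd_apply, ← integral_conj]
  simp [mFourier_zero]

end Fourier

theorem finite_setOf_nsmul_eq {p : ℝ} {n : ℕ} (hn : n ≠ 0) (c : AddCircle p) :
    {u : AddCircle p | n • u = c}.Finite := by
  rcases Set.eq_empty_or_nonempty {u : AddCircle p | n • u = c} with h | ⟨v, rfl⟩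
  · rw [h]
    exact Set.finite_empty
  · refine ((AddCircle.finite_torsion p (Nat.pos_of_ne_zero hn)).image (· + v)).subset
      fun u (hu : n • u = n • v) => ⟨u - v, ?_, sub_add_cancel u v⟩
    simp [nsmul_sub, hu]

namespace Torus

open UnitAddTorus (mFourier mFourierLp orthonormal_mFourier)

variable {d : ℕ}

/-- The duality between characters `χ ∈ ℤ^d` and points of the torus, written additively:
`pairing χ x = ∑ i, χ i • x i`, so that `UnitAddTorus.mFourier χ x = e^{2πi pairing χ x}`. -/
noncomputable def pairing : (Fin d → ℤ) →ₗ[ℤ] Torus d →ₗ[ℤ] AddCircle (1 : ℝ) :=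
  (Fintype.bilinearCombination ℤ ℤ).flip

theorem pairing_apply (χ : Fin d → ℤ) (x : Torus d) : pairing χ x = ∑ i, χ i • x i :=
  rfl

theorem continuous_pairing (χ : Fin d → ℤ) :
    Continuous (pairing χ : Torus d → AddCircle (1 : ℝ)) := by
  change Continuous fun x : Torus d => ∑ i, χ i • x i
  fun_prop

theorem pairing_single_one (i : Fin d) (x : Torus d) : pairing (Pi.single i 1) x = x i := by
  simp [pairing_apply, Pi.single_apply]

theorem eq_of_forall_pairing_eq {x y : Torus d} (h : ∀ χ, pairing χ x = pairing χ y) : x = y :=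
  funext fun i => by simpa only [pairing_single_one] using h (Pi.single i 1)

theorem mFourier_apply_eq_toCircle (χ : Fin d → ℤ) (x : Torus d) :
    mFourier χ x = (AddCircle.toCircle (pairing χ x) : ℂ) := by
  simp only [mFourier, ContinuousMap.coe_mk, fourier_apply, pairing_apply]
  exact (map_prod (Circle.coeHom.comp AddCircle.toCircle_addChar.toMonoidHom)
    (fun i => Multiplicative.ofAdd (χ i • x i)) Finset.univ).symm

theorem pairing_injective : Function.Injective (pairing (d := d)) := by
  intro χ ψ h
  have hχψ : mFourier χ = mFourier ψ := ContinuousMap.ext fun x => by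
    rw [mFourier_apply_eq_toCircle, mFourier_apply_eq_toCircle, h]
  exact orthonormal_mFourier.linearIndependent.injective <| by
    simp only [mFourierLp, hχψ]

theorem mFourier_add_apply (χ : Fin d → ℤ) (x y : Torus d) :
    mFourier χ (x + y) = mFourier χ x * mFourier χ y := by
  simp only [mFourier_apply_eq_toCircle, map_add, AddCircle.toCircle_add, Circle.coe_mul]

/-- The endomorphism `toralAuto U` bundled as a homomorphism of the torus. -/
noncomputable def toralEnd (U : Matrix (Fin d) (Fin d) ℤ) : Torus d →+ Torus d where
  toFun := toralAuto U
  map_zero' := by ext; simp [toralAuto]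
  map_add' x y := by ext; simp [toralAuto, Finset.sum_add_distrib]

/-- The action of `U` on characters `ℤ^d`, dual to its action on the torus. -/
noncomputable def dualEnd (U : Matrix (Fin d) (Fin d) ℤ) : Module.End ℤ (Fin d → ℤ) :=
  Matrix.toLin' U.transpose

theorem pairing_dualEnd (U : Matrix (Fin d) (Fin d) ℤ) (χ : Fin d → ℤ) (x : Torus d) :
    pairing (dualEnd U χ) x = pairing χ (toralAuto U x) := by
  simp only [pairing_apply, dualEnd, toralAuto, Matrix.toLin'_apply, Matrix.mulVec, dotProduct,
    Matrix.transpose_apply, Finset.sum_smul, Finset.smul_sum, smul_smul, mul_comm]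
  exact Finset.sum_comm

theorem pairing_pow_dualEnd (U : Matrix (Fin d) (Fin d) ℤ) (j : ℕ) (χ : Fin d → ℤ)
    (x : Torus d) : pairing ((dualEnd U ^ j) χ) x = pairing χ ((toralAuto U)^[j] x) := by
  induction j generalizing x with
  | zero => rfl
  | succ j ih =>
    rw [pow_succ', Module.End.mul_apply, pairing_dualEnd, ih, Function.iterate_succ_apply]

theorem continuous_toralAuto (U : Matrix (Fin d) (Fin d) ℤ) : Continuous (toralAuto U) := by
  unfold toralAuto
  fun_prop

theorem dualEnd_sub_one_pow (U : Matrix (Fin d) (Fin d) ℤ) (k : ℕ) :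
    (dualEnd U - 1) ^ k = dualEnd ((U - 1) ^ k) := by
  simp only [dualEnd, Matrix.transpose_pow, Matrix.toLin'_pow, Matrix.transpose_sub,
    Matrix.transpose_one, map_sub, Matrix.toLin'_one]
  rfl

theorem isNilpotent_dualEnd_sub_one {U : Matrix (Fin d) (Fin d) ℤ} (hU : IsNilpotent (U - 1)) :
    IsNilpotent (dualEnd U - 1) := by
  obtain ⟨k, hk⟩ := hU
  exact ⟨k, by rw [dualEnd_sub_one_pow, hk, dualEnd, Matrix.transpose_zero, map_zero]⟩

/-- The closed subgroup of the torus on which all the characters in `Γ` vanish. -/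
noncomputable def annihilator (Γ : Submodule ℤ (Fin d → ℤ)) : AddSubgroup (Torus d) :=
  ⨅ χ ∈ Γ, (pairing χ).toAddMonoidHom.ker

theorem mem_annihilator {Γ : Submodule ℤ (Fin d → ℤ)} {x : Torus d} :
    x ∈ annihilator Γ ↔ ∀ χ ∈ Γ, pairing χ x = 0 := by
  simp [annihilator, AddSubgroup.mem_iInf]

theorem mem_vadd_annihilator {Γ : Submodule ℤ (Fin d → ℤ)} {a x : Torus d} :
    x ∈ a +ᵥ (annihilator Γ : Set (Torus d)) ↔ ∀ χ ∈ Γ, pairing χ x = pairing χ a := by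
  simp only [mem_leftAddCoset_iff, SetLike.mem_coe, mem_annihilator, map_add, map_neg,
    neg_add_eq_zero, @eq_comm _ (pairing _ a)]

theorem isClosed_annihilator (Γ : Submodule ℤ (Fin d → ℤ)) :
    IsClosed (annihilator Γ : Set (Torus d)) := by
  have : (annihilator Γ : Set (Torus d)) = ⋂ χ ∈ Γ, pairing χ ⁻¹' {0} := by
    ext; simp [mem_annihilator]
  rw [this]
  exact isClosed_biInter fun χ _ => isClosed_singleton.preimage (continuous_pairing χ)

theorem annihilator_le_comap_toralEnd {U : Matrix (Fin d) (Fin d) ℤ}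
    {Γ : Submodule ℤ (Fin d → ℤ)} (hΓ : Γ ≤ Γ.comap (dualEnd U)) :
    annihilator Γ ≤ (annihilator Γ).comap (toralEnd U) := fun x hx =>
  mem_annihilator.2 fun χ hχ => (pairing_dualEnd U χ x).symm.trans (mem_annihilator.1 hx _ (hΓ hχ))

theorem annihilator_ne_top {Γ : Submodule ℤ (Fin d → ℤ)} {χ : Fin d → ℤ} (hχ : χ ∈ Γ)
    (hχ0 : χ ≠ 0) : annihilator Γ ≠ ⊤ := fun h =>
  hχ0 <| pairing_injective <| LinearMap.ext fun x => by
    rw [mem_annihilator.1 (h ▸ AddSubgroup.mem_top x) χ hχ, map_zero, LinearMap.zero_apply]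

/- `Γ` is a direct summand of `ℤ^d`, so its annihilator is the image of the torus under the
endomorphism dual to a projection of `ℤ^d` with kernel `Γ`. -/
theorem isConnected_annihilator (Γ : Submodule ℤ (Fin d → ℤ))
    [IsAddTorsionFree ((Fin d → ℤ) ⧸ Γ)] : IsConnected (annihilator Γ : Set (Torus d)) := by
  obtain ⟨s, hs⟩ := Γ.mkQ.exists_rightInverse_of_surjective Γ.range_mkQ
  set p : Module.End ℤ (Fin d → ℤ) := s ∘ₗ Γ.mkQ with hp
  obtain ⟨U, hU⟩ : ∃ U : Matrix (Fin d) (Fin d) ℤ, dualEnd U = p :=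
    ⟨(LinearMap.toMatrix' p).transpose, by simp [dualEnd]⟩
  have hrange : (annihilator Γ : Set (Torus d)) = Set.range (toralAuto U) := by
    ext x
    rw [SetLike.mem_coe, mem_annihilator]
    refine ⟨fun hx => ⟨x, eq_of_forall_pairing_eq fun χ => ?_⟩, ?_⟩
    · have hmem : p χ - χ ∈ Γ := by
        rw [← Submodule.Quotient.eq]
        exact LinearMap.congr_fun hs (Γ.mkQ χ)
      rw [← pairing_dualEnd, hU]
      simpa [sub_eq_zero] using hx _ hmem
    · rintro ⟨y, rfl⟩ χ hχ
      rw [← pairing_dualEnd, hU, hp, LinearMap.comp_apply, Submodule.mkQ_apply,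
        (Submodule.Quotient.mk_eq_zero Γ).2 hχ]
      simp
  rw [hrange]
  exact isConnected_range (continuous_toralAuto U)


section Measure

/-- The characters that vanish almost everywhere. -/
def aeKernel (μ : Measure (Torus d)) : Submodule ℤ (Fin d → ℤ) where
  carrier := {χ | ∀ᵐ x ∂μ, pairing χ x = 0}
  zero_mem' := by simp
  add_mem' {χ ψ} hχ hψ := by
    change ∀ᵐ x ∂μ, pairing (χ + ψ) x = 0
    filter_upwards [hχ, hψ] with x hx hy
    rw [map_add, LinearMap.add_apply, hx, hy, add_zero]
  smul_mem' n χ hχ := by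
    change ∀ᵐ x ∂μ, pairing (n • χ) x = 0
    filter_upwards [hχ] with x hx
    rw [map_smul, LinearMap.smul_apply, hx, smul_zero]

/-- The characters of which some positive multiple is almost everywhere constant. -/
def virtuallyConstant (μ : Measure (Torus d)) : Submodule ℤ (Fin d → ℤ) where
  carrier := {χ | ∃ n : ℕ, n ≠ 0 ∧ ∃ c, ∀ᵐ x ∂μ, n • pairing χ x = c}
  zero_mem' := ⟨1, one_ne_zero, 0, by simp⟩
  add_mem' := by
    rintro χ ψ ⟨m, hm, b, hb⟩ ⟨n, hn, c, hc⟩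
    refine ⟨m * n, mul_ne_zero hm hn, n • b + m • c, ?_⟩
    filter_upwards [hb, hc] with x hx hy
    rw [map_add, LinearMap.add_apply, nsmul_add, mul_nsmul, hx, mul_nsmul', hy]
  smul_mem' := by
    rintro k χ ⟨n, hn, c, hc⟩
    refine ⟨n, hn, k • c, ?_⟩
    filter_upwards [hc] with x hx
    rw [map_smul, LinearMap.smul_apply, smul_comm, hx]

variable {μ : Measure (Torus d)} {U : Matrix (Fin d) (Fin d) ℤ} {χ : Fin d → ℤ}

theorem mem_aeKernel : χ ∈ aeKernel μ ↔ ∀ᵐ x ∂μ, pairing χ x = 0 := Iff.rfl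

theorem mem_virtuallyConstant :
    χ ∈ virtuallyConstant μ ↔ ∃ n : ℕ, n ≠ 0 ∧ ∃ c, ∀ᵐ x ∂μ, n • pairing χ x = c := Iff.rfl

instance instIsAddTorsionFreeQuotientVirtuallyConstant :
    IsAddTorsionFree ((Fin d → ℤ) ⧸ virtuallyConstant μ) := by
  refine isAddTorsionFree_quotient_of_forall_nsmul_mem fun n hn χ hχ => ?_
  obtain ⟨m, hm, c, hc⟩ := mem_virtuallyConstant.1 hχ
  refine ⟨m * n, mul_ne_zero hm hn, c, ?_⟩
  filter_upwards [hc] with x hx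
  rwa [map_nsmul, LinearMap.smul_apply, ← mul_nsmul'] at hx

theorem aeKernel_le_comap_dualEnd (hμ : Measure.QuasiMeasurePreserving (toralAuto U) μ μ) :
    aeKernel μ ≤ (aeKernel μ).comap (dualEnd U) := by
  intro χ hχ
  refine mem_aeKernel.2 ?_
  simpa only [pairing_dualEnd] using hμ.ae (mem_aeKernel.1 hχ)

theorem virtuallyConstant_le_comap_dualEnd
    (hμ : Measure.QuasiMeasurePreserving (toralAuto U) μ μ) :
    virtuallyConstant μ ≤ (virtuallyConstant μ).comap (dualEnd U) := by
  rintro χ ⟨n, hn, c, hc⟩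
  refine ⟨n, hn, c, ?_⟩
  simpa only [pairing_dualEnd] using hμ.ae hc

theorem mem_virtuallyConstant_of_apply_sub_mem_aeKernel (hμ : Ergodic (toralAuto U) μ)
    (hχ : dualEnd U χ - χ ∈ aeKernel μ) : χ ∈ virtuallyConstant μ := by
  have hinv : pairing χ ∘ toralAuto U =ᵐ[μ] pairing χ := by
    filter_upwards [mem_aeKernel.1 hχ] with x hx
    rwa [map_sub, LinearMap.sub_apply, sub_eq_zero, pairing_dualEnd] at hx
  obtain ⟨c, hc⟩ :=
    hμ.ae_eq_const_of_ae_eq_comp₀ (continuous_pairing χ).measurable.nullMeasurable hinv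
  exact ⟨1, one_ne_zero, c, hc.mono fun x hx => (one_nsmul _).trans hx⟩

theorem annihilator_virtuallyConstant_ne_top [NeZero d] (hμ : Ergodic (toralAuto U) μ)
    (hU : IsNilpotent (dualEnd U - 1)) : annihilator (virtuallyConstant μ) ≠ ⊤ := by
  obtain ⟨χ, hχ0, hχ⟩ := exists_ne_zero_apply_eq_zero_of_isNilpotent hU
  refine annihilator_ne_top (mem_virtuallyConstant_of_apply_sub_mem_aeKernel hμ ?_) hχ0
  exact (show dualEnd U χ - χ = 0 from hχ) ▸ zero_mem _

theorem exists_measure_vadd_annihilator_ne_zero [NeZero μ] :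
    ∃ a : Torus d, μ (a +ᵥ (annihilator (virtuallyConstant μ) : Set (Torus d))) ≠ 0 := by
  obtain ⟨S, hS⟩ := IsNoetherian.noetherian (virtuallyConstant μ)
  have hSmem (χ : S) : (χ : Fin d → ℤ) ∈ virtuallyConstant μ := hS ▸ Submodule.subset_span χ.2
  choose n hn c hc using fun χ : S => mem_virtuallyConstant.1 (hSmem χ)
  obtain ⟨a, ha⟩ := exists_measure_preimage_singleton_ne_zero
    (f := fun x (χ : S) => pairing (χ : Fin d → ℤ) x)
    (s := Set.univ.pi fun χ => {u | n χ • u = c χ})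
    (Set.countable_univ_pi fun χ => (finite_setOf_nsmul_eq (hn χ) (c χ)).countable)
    ((ae_all_iff.2 hc).mono fun x hx χ _ => hx χ)
  refine ⟨a, fun h => ha <| measure_mono_null ?_ h⟩
  intro x hx
  rw [mem_vadd_annihilator, ← hS]
  exact LinearMap.eqOn_span (f := pairing.flip x) (g := pairing.flip a)
    fun χ hχ => congrFun hx ⟨χ, hχ⟩

theorem exists_cycle_vadd_annihilator [IsProbabilityMeasure μ] (hμ : Ergodic (toralAuto U) μ) :
    ∃ m ≠ 0, ∃ a, (toralAuto U)^[m] a ∈ a +ᵥ (annihilator (virtuallyConstant μ) : Set (Torus d)) ∧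
      (∀ i, μ ((toralAuto U)^[i] a +ᵥ (annihilator (virtuallyConstant μ) : Set (Torus d))) ≠ 0) ∧
      ∀ᵐ x ∂μ, x ∈ ⋃ i ∈ Finset.range m,
        ((toralAuto U)^[i] a +ᵥ (annihilator (virtuallyConstant μ) : Set (Torus d))) := by
  have hT := annihilator_le_comap_toralEnd (virtuallyConstant_le_comap_dualEnd hμ.quasiErgodic.1)
  have hH := (isClosed_annihilator (virtuallyConstant μ)).measurableSet
  obtain ⟨a, ha⟩ := exists_measure_vadd_annihilator_ne_zero (μ := μ)
  obtain ⟨m, hm, hma⟩ :=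
    exists_iterate_mem_vadd hT hμ.toMeasurePreserving.conservative hH ha
  exact ⟨m, hm, a, hma, measure_iterate_vadd_ne_zero hT hμ.toMeasurePreserving ha,
    ae_mem_biUnion_iterate_vadd hT hμ hH ha hm hma⟩

theorem exists_pow_dualEnd_apply_sub_mem_aeKernel [IsProbabilityMeasure μ]
    (hμ : Ergodic (toralAuto U) μ) :
    ∃ m ≠ 0, ∀ χ ∈ virtuallyConstant μ, (dualEnd U ^ m) χ - χ ∈ aeKernel μ := by
  have hT := annihilator_le_comap_toralEnd (virtuallyConstant_le_comap_dualEnd hμ.quasiErgodic.1)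
  obtain ⟨m, hm, a, hma, -, hμa⟩ := exists_cycle_vadd_annihilator hμ
  refine ⟨m, hm, fun χ hχ => mem_aeKernel.2 ?_⟩
  filter_upwards [hμa] with x hx
  obtain ⟨i, -, hxi⟩ := Set.mem_iUnion₂.1 hx
  rw [map_sub, LinearMap.sub_apply, sub_eq_zero, pairing_pow_dualEnd]
  exact mem_vadd_annihilator.1 (iterate_mem_vadd_self_of_mem_vadd hT hma hxi) χ hχ

theorem integral_mFourier_pow_dualEnd (hμ : MeasurePreserving (toralAuto U) μ μ) (j : ℕ)
    (χ : Fin d → ℤ) : ∫ x, mFourier ((dualEnd U ^ j) χ) x ∂μ =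
      ∫ x, mFourier χ x ∂μ := by
  have hT := hμ.iterate j
  calc ∫ x, mFourier ((dualEnd U ^ j) χ) x ∂μ
      = ∫ x, mFourier χ ((toralAuto U)^[j] x) ∂μ := by
        simp only [mFourier_apply_eq_toCircle, pairing_pow_dualEnd]
    _ = ∫ x, mFourier χ x ∂(μ.map (toralAuto U)^[j]) :=
        (integral_map hT.aemeasurable
          (mFourier χ).continuous.aestronglyMeasurable).symm
    _ = ∫ x, mFourier χ x ∂μ := by rw [hT.map_eq]

theorem integral_mFourier_eq_zero_of_ae_eq_const (hμ : MeasurePreserving (toralAuto U) μ μ)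
    {j : ℕ} {c : AddCircle (1 : ℝ)} (hc : c ≠ 0)
    (hχ : ∀ᵐ x ∂μ, pairing ((dualEnd U ^ j) χ - χ) x = c) :
    ∫ x, mFourier χ x ∂μ = 0 := by
  have hmul : ∫ x, mFourier χ x ∂μ =
      AddCircle.toCircle c * ∫ x, mFourier χ x ∂μ := by
    rw [← integral_const_mul, ← integral_mFourier_pow_dualEnd hμ j]
    refine integral_congr_ae ?_
    filter_upwards [hχ] with x hx
    rw [map_sub, LinearMap.sub_apply, sub_eq_iff_eq_add] at hx
    simp only [mFourier_apply_eq_toCircle, hx, AddCircle.toCircle_add, Circle.coe_mul]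
  by_contra h0
  have hc1 : AddCircle.toCircle c = 1 :=
    Circle.ext (mul_right_cancel₀ h0 (by simpa using hmul.symm))
  exact hc (AddCircle.injective_toCircle one_ne_zero (by rw [hc1, AddCircle.toCircle_zero]))

/- The sum of `χ` over its orbit is an invariant character, and it differs from a multiple of `χ`
by an element of `virtuallyConstant μ`. -/
theorem mem_virtuallyConstant_of_pow_apply_sub_mem_aeKernel (hμ : Ergodic (toralAuto U) μ)
    (hχ : dualEnd U χ - χ ∈ virtuallyConstant μ) {N : ℕ} (hN : N ≠ 0)
    (hχN : (dualEnd U ^ N) χ - χ ∈ aeKernel μ) : χ ∈ virtuallyConstant μ := by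
  have hstable := virtuallyConstant_le_comap_dualEnd hμ.quasiErgodic.1
  set σ := ∑ j ∈ Finset.range N, (dualEnd U ^ j) χ with hσ
  have hσ_mem : σ ∈ virtuallyConstant μ := by
    refine mem_virtuallyConstant_of_apply_sub_mem_aeKernel hμ ?_
    have : dualEnd U σ - σ = (dualEnd U ^ N) χ - χ := by
      simp only [hσ, map_sum, ← Module.End.mul_apply, ← pow_succ', ← Finset.sum_sub_distrib]
      simp [Finset.sum_range_sub (fun j => (dualEnd U ^ j) χ)]
    rwa [this]
  have hdiff : σ - N • χ ∈ virtuallyConstant μ := by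
    have : σ - N • χ = ∑ j ∈ Finset.range N, ((dualEnd U ^ j) χ - χ) := by
      simp [hσ, Finset.sum_sub_distrib]
    rw [this]
    exact sum_mem fun j _ => pow_apply_sub_mem hstable hχ j
  refine mem_of_nsmul_mem_of_isAddTorsionFree_quotient hN ?_
  simpa using sub_mem hσ_mem hdiff

variable [IsProbabilityMeasure μ]

theorem integral_mFourier_eq_zero_of_apply_sub_mem (hμ : Ergodic (toralAuto U) μ)
    (hχ : χ ∉ virtuallyConstant μ) (hχ' : dualEnd U χ - χ ∈ virtuallyConstant μ) :
    ∫ x, mFourier χ x ∂μ = 0 := by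
  obtain ⟨m, hm, hperiod⟩ := exists_pow_dualEnd_apply_sub_mem_aeKernel hμ
  set ψ := (dualEnd U ^ m) χ - χ with hψ
  have hψ_mem : ψ ∈ virtuallyConstant μ :=
    pow_apply_sub_mem (virtuallyConstant_le_comap_dualEnd hμ.quasiErgodic.1) hχ' m
  obtain ⟨n, hn, c, hc⟩ := mem_virtuallyConstant.1 hψ_mem
  have hstable : aeKernel μ ≤ (aeKernel μ).comap (dualEnd U ^ m) :=
    Submodule.le_comap_pow_of_le_comap _ (aeKernel_le_comap_dualEnd hμ.quasiErgodic.1) m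
  have hmn : ((dualEnd U ^ m) ^ n) χ - χ - n • ψ ∈ aeKernel μ :=
    pow_apply_sub_nsmul_mem hstable (by simp [hψ]) (hperiod ψ hψ_mem) n
  rw [← pow_mul] at hmn
  have hconst : ∀ᵐ x ∂μ, pairing ((dualEnd U ^ (m * n)) χ - χ) x = c := by
    filter_upwards [mem_aeKernel.1 hmn, hc] with x hx hcx
    rwa [map_sub, LinearMap.sub_apply, map_nsmul, LinearMap.smul_apply, hcx, sub_eq_zero] at hx
  rcases eq_or_ne c 0 with rfl | hc0
  · exact absurd (mem_virtuallyConstant_of_pow_apply_sub_mem_aeKernel hμ hχ' (mul_ne_zero hm hn)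
      (mem_aeKernel.2 hconst)) hχ
  · exact integral_mFourier_eq_zero_of_ae_eq_const hμ.toMeasurePreserving hc0 hconst

theorem integral_mFourier_eq_zero_of_forall_pow_sub (hμ : MeasurePreserving (toralAuto U) μ μ)
    (hχ : ∀ k ≠ 0, ∫ x, mFourier ((dualEnd U ^ k) χ - χ) x ∂μ = 0) :
    ∫ x, mFourier χ x ∂μ = 0 := by
  refine eq_zero_of_forall_integral_mFourier_eq (n := fun j => (dualEnd U ^ j) χ)
    (fun i j hij => ?_) (integral_mFourier_pow_dualEnd hμ · χ)
  have : (dualEnd U ^ j) χ - (dualEnd U ^ i) χ =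
      (dualEnd U ^ i) ((dualEnd U ^ (j - i)) χ - χ) := by
    rw [map_sub, ← Module.End.mul_apply, ← pow_add, Nat.add_sub_cancel' hij.le]
  rw [this, integral_mFourier_pow_dualEnd hμ]
  exact hχ _ (Nat.sub_ne_zero_of_lt hij)

theorem integral_mFourier_eq_zero (hμ : Ergodic (toralAuto U) μ) {k : ℕ}
    (hk : ((dualEnd U - 1) ^ k) χ = 0) (hχ : χ ∉ virtuallyConstant μ) :
    ∫ x, mFourier χ x ∂μ = 0 := by
  induction k generalizing χ with
  | zero => exact absurd (by simpa using hk) fun h : χ = 0 => hχ (h ▸ zero_mem _)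
  | succ k ih =>
    by_cases hχ' : dualEnd U χ - χ ∈ virtuallyConstant μ
    · exact integral_mFourier_eq_zero_of_apply_sub_mem hμ hχ hχ'
    refine integral_mFourier_eq_zero_of_forall_pow_sub hμ.toMeasurePreserving
      fun n hn => ih ?_ fun h => hχ' ?_
    · exact sub_one_pow_apply_pow_apply_sub_eq_zero hk n
    · exact apply_sub_mem_of_pow_apply_sub_mem
        (virtuallyConstant_le_comap_dualEnd hμ.quasiErgodic.1) hn (hk ▸ zero_mem _) h

theorem vaddInvariantMeasure_annihilator (hμ : Ergodic (toralAuto U) μ)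
    (hU : IsNilpotent (dualEnd U - 1)) :
    VAddInvariantMeasure (annihilator (virtuallyConstant μ)) (Torus d) μ := by
  obtain ⟨k, hk⟩ := hU
  refine ⟨fun h s hs => ?_⟩
  have hh : Measurable (h +ᵥ · : Torus d → Torus d) := measurable_const_vadd h
  have := Measure.isProbabilityMeasure_map (μ := μ) hh.aemeasurable
  have hmap : μ.map (h +ᵥ ·) = μ := ext_of_forall_integral_mFourier_eq fun χ => by
    rw [integral_map hh.aemeasurable (mFourier χ).continuous.aestronglyMeasurable]
    simp only [AddSubgroup.vadd_def, vadd_eq_add, mFourier_add_apply, integral_const_mul]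
    by_cases hχ : χ ∈ virtuallyConstant μ
    · rw [mFourier_apply_eq_toCircle, mem_annihilator.1 h.2 χ hχ]
      simp
    · rw [integral_mFourier_eq_zero hμ (by rw [hk]; rfl) hχ, mul_zero]
  rw [← Measure.map_apply hh hs, hmap]

end Measure

end Torus

/-- Classification of ergodic invariant measures for a unipotent toral automorphism: the
support is a finite union of cosets `Uⁱa + H` of a closed connected proper subgroup `H`, and
on each coset the measure is a translate of the (normalized) Haar measure of `H`. -/
theorem ergodic_measure_classification_unipotent
    {d : ℕ} (hd : 0 < d) (U : Matrix (Fin d) (Fin d) ℤ)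
    (hUdet : IsUnit U.det) (hUuni : (U - 1) ^ d = 0)
    (μ : Measure (Torus d)) (hμp : IsProbabilityMeasure μ)
    (herg : Ergodic (toralAuto U) μ) :
    ∃ (m : ℕ) (a : Torus d) (H : AddSubgroup (Torus d)), 0 < m ∧
      IsClosed (H : Set (Torus d)) ∧ IsConnected (H : Set (Torus d)) ∧ H ≠ ⊤ ∧
      msupport μ = ⋃ i ∈ Finset.range m, ((toralAuto U)^[i] a +ᵥ (H : Set (Torus d))) ∧
      ∃ ν : Measure H, ν.IsAddHaarMeasure ∧ IsProbabilityMeasure ν ∧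
        ∀ i < m, μ.restrict ((toralAuto U)^[i] a +ᵥ (H : Set (Torus d))) =
          μ ((toralAuto U)^[i] a +ᵥ (H : Set (Torus d))) •
            Measure.map (fun h : H => (toralAuto U)^[i] a + (h : Torus d)) ν := by
  have : NeZero d := ⟨hd.ne'⟩
  have hU := Torus.isNilpotent_dualEnd_sub_one ⟨d, hUuni⟩
  set H := Torus.annihilator (Torus.virtuallyConstant μ)
  have hH_closed : IsClosed (H : Set (Torus d)) := Torus.isClosed_annihilator _
  have : CompactSpace H := isCompact_iff_compactSpace.1 hH_closed.isCompact
  have : VAddInvariantMeasure H (Torus d) μ := Torus.vaddInvariantMeasure_annihilator herg hU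
  obtain ⟨m, hm, a, -, hpos, hcover⟩ := Torus.exists_cycle_vadd_annihilator herg
  obtain ⟨ν, hν, hνp⟩ := exists_isAddHaarMeasure_isProbabilityMeasure H
  refine ⟨m, a, H, Nat.pos_of_ne_zero hm, hH_closed, Torus.isConnected_annihilator _,
    Torus.annihilator_virtuallyConstant_ne_top herg hU, ?_, ν, hν, hνp, fun i _ => ?_⟩
  · rw [msupport_eq_support]
    exact support_eq_biUnion_vadd hH_closed (fun i _ => hpos i) hcover
  · exact restrict_vadd_eq_smul_map hH_closed.measurableSet _
end

section
/- Let S be a group acting on a measurable space X such that each element of S acts measurably, and suppose the action is transitive. Let ν be an S-invariant probability measure on X, and suppose H is a normal subgroup of S such that the quotient group S/H is countable and every H-orbit in X is a measurable set. Then ν is supported on finitely many H-orbits, i.e., there exist finitely many points x₁,…,x_k ∈ X with ν(H·x₁ ∪ ⋯ ∪ H·x_k) = 1. -/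
open MeasureTheory

/-!
The orbits of a normal subgroup `H` are blocks of the transitive `S`-action, so `S` permutes them
transitively and, `ν` being invariant, all of them have the same measure. If there are only
countably many, this common measure cannot be `0`; since `ν` is finite, there are then only
finitely many.
-/

section Orbits

open MulAction Function
open scoped Pointwise

variable {G X : Type*} [Group G] [MulAction G X]

theorem countable_orbitRel_quotient [IsPretransitive G X] (H : Subgroup G) [Countable (G ⧸ H)] :
    Countable (orbitRel.Quotient H X) := by
  rcases isEmpty_or_nonempty X with _ | ⟨⟨x⟩⟩
  · exact Quotient.mk''_surjective.countable
  -- Without normality of `H`, `g ↦ H g x` is not constant on left cosets, but `g ↦ H g⁻¹ x` is.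
  let orbitOfCoset : G ⧸ H → orbitRel.Quotient H X :=
    Quotient.lift (fun g ↦ Quotient.mk'' (g⁻¹ • x)) fun a b hab ↦ by
      refine Quotient.sound' ⟨⟨a⁻¹ * b, QuotientGroup.leftRel_apply.1 hab⟩, ?_⟩
      simp [Subgroup.smul_def, smul_smul]
  have surjective_orbitOfCoset : Surjective orbitOfCoset := by
    refine Quotient.lift_surjective _ _ fun q ↦ ?_
    obtain ⟨y, rfl⟩ := Quotient.mk''_surjective q
    obtain ⟨g, rfl⟩ := exists_smul_eq G x y
    exact ⟨g⁻¹, by rw [inv_inv]⟩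
  exact surjective_orbitOfCoset.countable

variable (G X) in
theorem exists_fin_iUnion_orbit_eq_univ [Finite (orbitRel.Quotient G X)] :
    ∃ (k : ℕ) (x : Fin k → X), ⋃ i, orbit G (x i) = Set.univ := by
  obtain ⟨k, ⟨e⟩⟩ := Finite.exists_equiv_fin (orbitRel.Quotient G X)
  refine ⟨k, fun i ↦ (e.symm i).out, ?_⟩
  calc ⋃ i, orbit G (e.symm i).out
    _ = ⋃ i, (e.symm i).orbit := by
      simp only [orbitRel.Quotient.orbit_eq_orbit_out _ Quotient.out_eq']
    _ = ⋃ q : orbitRel.Quotient G X, q.orbit :=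
      e.symm.surjective.iUnion_comp orbitRel.Quotient.orbit
    _ = Set.univ := (univ_eq_iUnion_orbit G X).symm

theorem orbitRel_quotient_orbit_mem_orbit_orbit [IsPretransitive G X] (H : Subgroup G) [H.Normal]
    (x : X) (q : orbitRel.Quotient H X) : q.orbit ∈ orbit G (orbit H x) := by
  obtain ⟨y, rfl⟩ := Quotient.mk''_surjective q
  obtain ⟨g, rfl⟩ := exists_smul_eq G x y
  exact ⟨g, smul_orbit_eq_orbit_smul H x g⟩

end Orbits

section Measure

open MulAction
open scoped Pointwise

variable {G X : Type*} [Group G] [MulAction G X] [MeasurableSpace X]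

variable (G) in
theorem exists_measure_orbit_ne_zero [Countable (orbitRel.Quotient G X)] (μ : Measure X)
    [NeZero μ] : ∃ x, μ (orbit G x) ≠ 0 := by
  by_contra! orbit_null
  have univ_null : μ Set.univ = 0 := by
    rw [univ_eq_iUnion_orbit G X, measure_iUnion_null_iff]
    rintro ⟨x⟩
    exact orbit_null x
  exact NeZero.ne μ (Measure.measure_univ_eq_zero.1 univ_null)

theorem finite_orbit_of_isBlock [MeasurableConstSMul G X] (μ : Measure X)
    [SMulInvariantMeasure G X μ] [IsFiniteMeasure μ] {B : Set X} (hB : IsBlock G B)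
    (hB_meas : NullMeasurableSet B μ) (hB_ne : μ B ≠ 0) : (orbit G B).Finite := by
  have nullMeasurable_translate (C : orbit G B) : NullMeasurableSet (C : Set X) μ := by
    obtain ⟨_, g, rfl⟩ := C
    exact hB_meas.smul g
  have measure_translate (C : orbit G B) : μ C = μ B := by
    obtain ⟨_, g, rfl⟩ := C
    exact measure_smul μ g B
  have disjoint_translates : Pairwise fun C D : orbit G B ↦ AEDisjoint μ (C : Set X) D :=
    fun C D hCD ↦ (hB.pairwiseDisjoint_range_smul C.2 D.2 (Subtype.coe_ne_coe.2 hCD)).aedisjoint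
  have finite_large := Measure.finite_const_le_meas_of_disjoint_iUnion₀ μ
    (pos_iff_ne_zero.2 hB_ne) nullMeasurable_translate disjoint_translates (measure_ne_top μ _)
  simp only [measure_translate, le_refl, Set.ofPred_true, Set.finite_univ_iff] at finite_large
  exact finite_large

theorem finite_orbitRel_quotient_of_measure_orbit_ne_zero [MeasurableConstSMul G X]
    [IsPretransitive G X] (μ : Measure X) [SMulInvariantMeasure G X μ] [IsFiniteMeasure μ]
    (H : Subgroup G) [H.Normal] {x : X} (horb : NullMeasurableSet (orbit H x) μ)
    (horb_ne : μ (orbit H x) ≠ 0) : Finite (orbitRel.Quotient H X) := by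
  have : Finite (orbit G (orbit H x)) :=
    finite_orbit_of_isBlock μ (.orbit_of_normal x) horb horb_ne
  exact .of_injective _ <| orbitRel.Quotient.orbit_injective.codRestrict
    (orbitRel_quotient_orbit_mem_orbit_orbit H x)

end Measure

theorem measure_supported_on_finitely_many_orbits_general
    {S X : Type*} [Group S] [MeasurableSpace X] [MulAction S X]
    (hmeas : ∀ s : S, Measurable fun x : X => s • x)
    (htrans : ∀ x y : X, ∃ s : S, s • x = y)
    (ν : Measure X) [IsFiniteMeasure ν] [NeZero ν]
    (hνinv : ∀ s : S, Measure.map (fun x : X => s • x) ν = ν)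
    (H : Subgroup S) [H.Normal] [Countable (MulAction.orbitRel.Quotient H X)]
    (horb : ∀ x : X, NullMeasurableSet (MulAction.orbit H x) ν) :
    ∃ (k : ℕ) (x : Fin k → X), ⋃ i, MulAction.orbit H (x i) = Set.univ := by
  have : MeasurableConstSMul S X := ⟨hmeas⟩
  have : MulAction.IsPretransitive S X := ⟨htrans⟩
  have : SMulInvariantMeasure S X ν := ((smulInvariantMeasure_tfae S ν).out 0 5).2 hνinv
  obtain ⟨x, hx⟩ := exists_measure_orbit_ne_zero H ν
  have : Finite (MulAction.orbitRel.Quotient H X) :=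
    finite_orbitRel_quotient_of_measure_orbit_ne_zero ν H (horb x) hx
  exact exists_fin_iUnion_orbit_eq_univ H X

/-- If a group `S` acts measurably and transitively on a measurable space preserving a
probability measure `ν`, and `H` is a normal subgroup with countable quotient `S/H` whose
orbits are measurable, then `ν` is supported on finitely many `H`-orbits. -/
theorem measure_supported_on_finitely_many_orbits
    {S X : Type*} [Group S] [MeasurableSpace X] [MulAction S X]
    (hmeas : ∀ s : S, Measurable fun x : X => s • x)
    (htrans : ∀ x y : X, ∃ s : S, s • x = y)
    (ν : Measure X) (hνp : IsProbabilityMeasure ν)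
    (hνinv : ∀ s : S, Measure.map (fun x : X => s • x) ν = ν)
    (H : Subgroup S) (hH : H.Normal) (hcount : Countable (S ⧸ H))
    (horb : ∀ x : X, MeasurableSet (MulAction.orbit H x)) :
    ∃ (k : ℕ) (x : Fin k → X), ν (⋃ i, MulAction.orbit H (x i)) = 1 := by
  have : MulAction.IsPretransitive S X := ⟨htrans⟩
  have : Countable (MulAction.orbitRel.Quotient H X) := countable_orbitRel_quotient H
  obtain ⟨k, x, hx⟩ := measure_supported_on_finitely_many_orbits_general hmeas htrans ν hνinv H
    fun x ↦ (horb x).nullMeasurableSet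
  exact ⟨k, x, hx ▸ measure_univ⟩
end

section
/- Let d ∈ ℕ, let U ∈ GL_d(ℤ) be a unipotent matrix, let X ≤ 𝕋^d be an infinite closed subgroup of the torus 𝕋^d = ℝ^d/ℤ^d, and let x ∈ X. Then there exist c ∈ ℕ and a sequence (x_n)_{n=1}^∞ of points of X such that U^{cn} x_n = x_n for every n ∈ ℕ and x_n → x as n → ∞. -/
open MeasureTheory Topology Filter

/-!
Write the torus as a quotient `p : ℝ^d → 𝕋^d` and let `V` be the largest linear subspace of the
closed subgroup `H = p⁻¹(X)`. A closed subgroup of `ℝ^d` coincides with its largest subspace near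
`0`, so `p(V)` is open, hence of some finite index `e`, in the compact group `X`. Thus `e • y`
lies in `p(V)` for every `y ∈ X` and, again by compactness, lifts to a vector of `V` of norm less
than a constant `R`. For `y = n • x` with lift `v`, the point `x - p(v / (en))` lies in `X`, is
killed by `en`, and tends to `x` since `‖v / (en)‖ < R / (en)`. Finally, if `(U - 1)^r = 0`, the
binomial theorem shows `U^(r! k) ≡ 1` modulo `k`, so that points killed by `k = en` have period
`r! e n`.
-/

section LinealitySpace

variable {E : Type*}

/-- The largest real subspace contained in an additive subgroup `H` of a real vector space: the
union of all the lines through the origin that lie in `H`. -/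
def linealitySpace [AddCommGroup E] [Module ℝ E] (H : AddSubgroup E) : Submodule ℝ E where
  carrier := {v | ∀ t : ℝ, t • v ∈ H}
  add_mem' hv hw t := by rw [smul_add]; exact H.add_mem (hv t) (hw t)
  zero_mem' t := by rw [smul_zero]; exact H.zero_mem
  smul_mem' c v hv t := by rw [smul_smul]; exact hv (t * c)

theorem linealitySpace_le [AddCommGroup E] [Module ℝ E] (H : AddSubgroup E) :
    (linealitySpace H).toAddSubgroup ≤ H :=
  fun v hv ↦ one_smul ℝ v ▸ hv 1

theorem mem_linealitySpace_of_tendsto_smul [SeminormedAddCommGroup E] [NormedSpace ℝ E]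
    {H : AddSubgroup E} (hH : IsClosed (H : Set E)) {ι : Type*} {l : Filter ι} [l.NeBot]
    {h : ι → E} (hhH : ∀ᶠ i in l, h i ∈ H) (hh : Tendsto h l (𝓝 0)) {c : ι → ℝ} {u : E}
    (hu : Tendsto (fun i ↦ c i • h i) l (𝓝 u)) : u ∈ linealitySpace H := by
  intro t
  have fract_smul : Tendsto (fun i ↦ Int.fract (t * c i) • h i) l (𝓝 0) := by
    refine squeeze_zero_norm (fun i ↦ ?_) (tendsto_zero_iff_norm_tendsto_zero.1 hh)
    rw [norm_smul, Real.norm_of_nonneg (Int.fract_nonneg _)]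
    exact mul_le_of_le_one_left (norm_nonneg _) (Int.fract_lt_one _).le
  have floor_smul : Tendsto (fun i ↦ ⌊t * c i⌋ • h i) l (𝓝 (t • u)) := by
    have := (hu.const_smul t).sub fract_smul
    simpa only [smul_smul, ← sub_smul, Int.self_sub_fract, Int.cast_smul_eq_zsmul, sub_zero]
      using this
  exact hH.mem_of_tendsto floor_smul (hhH.mono fun i hi ↦ H.zsmul_mem hi _)

variable [NormedAddCommGroup E] [NormedSpace ℝ E] [FiniteDimensional ℝ E] {H : AddSubgroup E}

theorem eventually_eq_zero_of_linealitySpace_eq_bot (hH : IsClosed (H : Set E))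
    (hbot : linealitySpace H = ⊥) : ∀ᶠ h : E in 𝓝[H] 0, h = 0 := by
  by_contra hfreq
  -- A limit direction `u` of nonzero elements of `H` that tend to `0` spans a line inside `H`.
  have : ProperSpace E := FiniteDimensional.proper_real E
  have : (𝓝[H] (0 : E) ⊓ 𝓟 {0}ᶜ).NeBot := frequently_mem_iff_neBot.1 (not_eventually.1 hfreq)
  let l : Ultrafilter E := .of (𝓝[H] (0 : E) ⊓ 𝓟 {0}ᶜ)
  have hl : ↑l ≤ 𝓝[H] (0 : E) := (Ultrafilter.of_le _).trans inf_le_left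
  have hl0 : ∀ᶠ h in (l : Filter E), h ≠ 0 :=
    le_principal_iff.1 ((Ultrafilter.of_le _).trans inf_le_right)
  obtain ⟨u, hu, hlu⟩ := (isCompact_sphere (0 : E) 1).ultrafilter_le_nhds
    (l.map fun h ↦ ‖h‖⁻¹ • h) <| by
      refine le_principal_iff.2 (hl0.mono fun h hh ↦ ?_)
      simp [norm_smul, hh]
  have hu0 : u ∈ linealitySpace H :=
    mem_linealitySpace_of_tendsto_smul hH (hl self_mem_nhdsWithin) (hl.trans nhdsWithin_le_nhds) hlu
  rw [hbot, Submodule.mem_bot] at hu0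
  simp [hu0] at hu

theorem linealitySpace_mem_nhdsWithin (hH : IsClosed (H : Set E)) :
    (linealitySpace H : Set E) ∈ 𝓝[H] 0 := by
  obtain ⟨W, hW⟩ := (linealitySpace H).exists_isCompl
  let P : E →ₗ[ℝ] E := W.projection _ hW.symm
  have hPH : ∀ h ∈ H, P h ∈ H := fun h hh ↦ by
    simpa using H.sub_mem hh (linealitySpace_le H (Submodule.sub_projection_mem hW.symm h))
  have tendsto_P : Tendsto P (𝓝[H] 0) (𝓝[(H ⊓ W.toAddSubgroup : AddSubgroup E)] 0) := by
    refine tendsto_nhdsWithin_iff.2 ⟨?_, ?_⟩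
    · exact (P.continuous_of_finiteDimensional.tendsto' 0 0 P.map_zero).mono_left nhdsWithin_le_nhds
    · exact eventually_mem_nhdsWithin.mono fun h hh ↦
        ⟨hPH h hh, Submodule.projection_apply_mem hW.symm h⟩
  have lineality_inf : linealitySpace (H ⊓ W.toAddSubgroup) = ⊥ :=
    (Submodule.eq_bot_iff _).2 fun v hv ↦
      Submodule.disjoint_def.1 hW.disjoint v (fun t ↦ (hv t).1) (linealitySpace_le _ hv).2
  filter_upwards [tendsto_P.eventually (eventually_eq_zero_of_linealitySpace_eq_bot
    (hH.inter W.closed_of_finiteDimensional) lineality_inf)] with h hh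
  exact (Submodule.projection_apply_eq_zero_iff hW.symm).1 hh

end LinealitySpace

theorem exists_subset_image_ball_of_isOpenMap {E Y : Type*} [PseudoMetricSpace E]
    [TopologicalSpace Y] {f : E → Y} (hf : IsOpenMap f) (a : E) {K : Set Y} (hK : IsCompact K)
    (hKf : K ⊆ Set.range f) : ∃ R : ℝ, K ⊆ f '' Metric.ball a R := by
  refine hK.elim_directed_cover _ (fun R : ℝ ↦ hf _ Metric.isOpen_ball) ?_
    (Monotone.directed_le fun _ _ h ↦ Set.image_mono (Metric.ball_subset_ball h))
  have iUnion_ball : ⋃ R : ℝ, Metric.ball a R = Set.univ :=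
    Set.iUnion_eq_univ_iff.2 fun v ↦ exists_gt (dist v a)
  rwa [← Set.image_iUnion, iUnion_ball, Set.image_univ]

section CompactSubgroup

variable {E G : Type*} [NormedAddCommGroup E] [NormedSpace ℝ E]
  [AddCommGroup G] [TopologicalSpace G] {p : E →+ G} {X : AddSubgroup G}

/-- The restriction of `p : E →+ G` to a homomorphism into `X` from the largest subspace of
`p⁻¹(X)`. When `p` is the exponential map of an abelian Lie group `G` and `X` is closed, this is
the exponential map of `X`. -/
def linealityMap (p : E →+ G) (X : AddSubgroup G) : linealitySpace (X.comap p) →+ X :=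
  (p.addSubgroupComap X).comp (AddSubgroup.inclusion (linealitySpace_le (X.comap p)))

variable [FiniteDimensional ℝ E]

theorem isOpenMap_linealityMap (hp : Continuous p) (hpo : IsOpenMap p)
    (hX : IsClosed (X : Set G)) : IsOpenMap (linealityMap p X) := by
  let V := linealitySpace (X.comap p)
  have hVH : (V : Set E) ⊆ X.comap p := linealitySpace_le (X.comap p)
  have lineality_mem_nhds : ((↑) ⁻¹' (V : Set E) : Set (X.comap p)) ∈ 𝓝 0 :=
    preimage_coe_mem_nhds_subtype.2 (linealitySpace_mem_nhdsWithin (hX.preimage hp))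
  have isOpenMap_inclusion : IsOpenMap (Set.inclusion hVH) := by
    refine IsOpenEmbedding.isOpenMap ⟨.inclusion hVH, ?_⟩
    rw [Set.range_inclusion hVH]
    exact (V.toAddSubgroup.addSubgroupOf (X.comap p)).isOpen_of_mem_nhds lineality_mem_nhds
  exact (hpo.restrictPreimage (X : Set G)).comp isOpenMap_inclusion

variable [IsTopologicalAddGroup G] [T2Space G]

theorem exists_bounded_lift_nsmul (hp : Continuous p) (hpo : IsOpenMap p)
    (hX : IsCompact (X : Set G)) :
    ∃ e : ℕ, 0 < e ∧ ∃ R : ℝ, ∀ y ∈ X, ∃ v ∈ linealitySpace (X.comap p), ‖v‖ < R ∧ p v = e • y := by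
  have hopen := isOpenMap_linealityMap hp hpo hX.isClosed
  have : CompactSpace X := isCompact_iff_compactSpace.1 hX
  let T : AddSubgroup X := (linealityMap p X).range
  have hT : IsOpen (T : Set X) := hopen.isOpen_range
  have : Finite (X ⧸ T) := T.quotient_finite_of_isOpen hT
  have : T.FiniteIndex := T.finiteIndex_of_finite_quotient
  obtain ⟨R, hR⟩ := exists_subset_image_ball_of_isOpenMap hopen 0
    (T.isClosed_of_isOpen hT).isCompact subset_rfl
  refine ⟨T.index, Nat.pos_of_ne_zero AddSubgroup.FiniteIndex.index_ne_zero, R, fun y hy ↦ ?_⟩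
  obtain ⟨v, hv, hvy⟩ := hR (T.nsmul_index_mem ⟨y, hy⟩)
  exact ⟨v, v.2, mem_ball_zero_iff.1 hv, congrArg Subtype.val hvy⟩

theorem exists_seq_nsmul_eq_zero_tendsto (hp : Continuous p) (hpo : IsOpenMap p)
    (hX : IsCompact (X : Set G)) :
    ∃ e : ℕ, 0 < e ∧ ∀ x ∈ X, ∃ xs : ℕ → G,
      (∀ n, xs n ∈ X ∧ (e * n) • xs n = 0) ∧ Tendsto xs atTop (𝓝 x) := by
  obtain ⟨e, he, R, hlift⟩ := exists_bounded_lift_nsmul hp hpo hX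
  refine ⟨e, he, fun x hx ↦ ?_⟩
  choose v hvX hvR hv using fun n : ℕ ↦ hlift (n • x) (X.nsmul_mem hx n)
  let w (n : ℕ) : E := (↑(e * n) : ℝ)⁻¹ • v n
  have nsmul_p_w (n : ℕ) : (e * n) • p (w n) = (e * n) • x := by
    rcases n.eq_zero_or_pos with rfl | hn
    · simp
    · have hen : (↑(e * n) : ℝ) ≠ 0 := Nat.cast_ne_zero.2 (Nat.mul_pos he hn).ne'
      rw [← map_nsmul, ← Nat.cast_smul_eq_nsmul ℝ, smul_inv_smul₀ hen, hv, mul_smul]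
  have tendsto_w : Tendsto w atTop (𝓝 0) := by
    have inv_tendsto : Tendsto (fun n : ℕ ↦ (↑(e * n) : ℝ)⁻¹) atTop (𝓝 0) :=
      tendsto_inv_atTop_nhds_zero_nat.comp (tendsto_id.const_mul_atTop' he)
    exact inv_tendsto.zero_smul_isBoundedUnder_le
      (isBoundedUnder_of ⟨R, fun n ↦ (hvR n).le⟩)
  refine ⟨fun n ↦ x - p (w n), fun n ↦ ⟨X.sub_mem hx (hvX n _), ?_⟩, ?_⟩
  · rw [smul_sub, nsmul_p_w, sub_self]
  · simpa using ((hp.tendsto 0).comp tendsto_w).const_sub x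

end CompactSubgroup

section Unipotent

theorem dvd_choose_mul_of_dvd {a i : ℕ} (hi : i ≠ 0) (hia : i ∣ a) (k : ℕ) :
    k ∣ (a * k).choose i := by
  obtain ⟨q, rfl⟩ := hia
  obtain ⟨j, rfl⟩ := Nat.exists_eq_add_one_of_ne_zero hi
  rcases hm : (j + 1) * q * k with _ | m
  · rw [Nat.choose_zero_succ]
    exact dvd_zero k
  · refine ⟨q * m.choose j, Nat.eq_of_mul_eq_mul_right j.succ_pos ?_⟩
    calc (m + 1).choose (j + 1) * (j + 1) = (m + 1) * m.choose j :=
          (Nat.add_one_mul_choose_eq m j).symm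
      _ = k * (q * m.choose j) * (j + 1) := by rw [← hm]; ring

theorem natCast_dvd_pow_factorial_mul_sub_one {R : Type*} [Ring R] {u : R} {r : ℕ}
    (hu : (u - 1) ^ r = 0) (k : ℕ) : (k : R) ∣ u ^ (r.factorial * k) - 1 := by
  have binomial := (Commute.one_right (u - 1)).add_pow (r.factorial * k)
  rw [sub_add_cancel, Finset.sum_range_succ'] at binomial
  simp only [one_pow, mul_one, pow_zero, Nat.choose_zero_right, Nat.cast_one] at binomial
  rw [binomial, add_sub_cancel_right]
  refine Finset.dvd_sum fun i _ ↦ ?_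
  rcases lt_or_ge i r with hir | hri
  · have hk := dvd_choose_mul_of_dvd i.succ_ne_zero (Nat.dvd_factorial i.succ_pos hir) k
    rw [← Nat.cast_comm]
    exact (Nat.cast_dvd_cast hk).mul_right _
  · rw [pow_eq_zero_of_le (by omega) hu, zero_mul]
    exact dvd_zero _

theorem pow_factorial_mul_apply_of_nsmul_eq_zero {G : Type*} [AddCommGroup G] {φ : AddMonoid.End G}
    {r : ℕ} (hφ : (φ - 1) ^ r = 0) {k : ℕ} {y : G} (hy : k • y = 0) :
    (φ ^ (r.factorial * k)) y = y := by
  obtain ⟨ψ, hψ⟩ := natCast_dvd_pow_factorial_mul_sub_one hφ k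
  have hsub : (φ ^ (r.factorial * k)) y - y = k • ψ y := DFunLike.congr_fun hψ y
  rwa [← map_nsmul, hy, map_zero, sub_eq_zero] at hsub

end Unipotent

section Torus

/-- The covering homomorphism `ℝ^d → 𝕋^d`. -/
def torusMk (d : ℕ) : (Fin d → ℝ) →+ Torus d :=
  AddMonoidHom.piMap fun _ ↦ QuotientAddGroup.mk' _

theorem continuous_torusMk (d : ℕ) : Continuous (torusMk d) :=
  Continuous.piMap fun _ ↦ AddCircle.continuous_mk' 1

theorem isOpenMap_torusMk (d : ℕ) : IsOpenMap (torusMk d) :=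
  IsOpenMap.piMap (fun _ ↦ QuotientAddGroup.isOpenMap_coe) (by simp)

open scoped Matrix.Module in
/-- The ring homomorphism sending an integer matrix `U` to the endomorphism `toralAuto U` of the
torus. -/
def toralEnd (d : ℕ) : Matrix (Fin d) (Fin d) ℤ →+* AddMonoid.End (Torus d) :=
  Module.toAddMonoidEnd _ _

theorem coe_toralEnd {d : ℕ} (U : Matrix (Fin d) (Fin d) ℤ) : ⇑(toralEnd d U) = toralAuto U := rfl

theorem isNilpotent_toralEnd_sub_one {d : ℕ} {U : Matrix (Fin d) (Fin d) ℤ}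
    (hU : IsNilpotent (U - 1)) : IsNilpotent (toralEnd d U - 1) := by
  simpa only [map_sub, map_one] using hU.map (toralEnd d)

end Torus

theorem exists_periodic_points_in_subgroup_converging_general {E G : Type*}
    [NormedAddCommGroup E] [NormedSpace ℝ E] [FiniteDimensional ℝ E]
    [AddCommGroup G] [TopologicalSpace G] [IsTopologicalAddGroup G] [T2Space G]
    {p : E →+ G} (hp : Continuous p) (hpo : IsOpenMap p)
    {φ : AddMonoid.End G} (hφ : IsNilpotent (φ - 1))
    {X : AddSubgroup G} (hX : IsCompact (X : Set G)) :
    ∃ c : ℕ, 0 < c ∧ ∀ x ∈ X, ∃ xs : ℕ → G,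
      (∀ n, xs n ∈ X ∧ φ^[c * n] (xs n) = xs n) ∧ Tendsto xs atTop (𝓝 x) := by
  obtain ⟨r, hr⟩ := hφ
  obtain ⟨e, he, happrox⟩ := exists_seq_nsmul_eq_zero_tendsto hp hpo hX
  refine ⟨r.factorial * e, Nat.mul_pos r.factorial_pos he, fun x hx ↦ ?_⟩
  obtain ⟨xs, hxs, hlim⟩ := happrox x hx
  refine ⟨xs, fun n ↦ ⟨(hxs n).1, ?_⟩, hlim⟩
  rw [mul_assoc, ← AddMonoid.End.coe_pow, pow_factorial_mul_apply_of_nsmul_eq_zero hr (hxs n).2]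

/-- Given a unipotent toral automorphism `U`, an infinite closed subgroup `X ≤ 𝕋^d` and a
point `x ∈ X`, there are `c ∈ ℕ` and points `xₙ ∈ X` of period `c·n` converging to `x`. -/
theorem exists_periodic_points_in_subgroup_converging
    {d : ℕ} (hd : 0 < d) (U : Matrix (Fin d) (Fin d) ℤ)
    (hUdet : IsUnit U.det) (hUuni : (U - 1) ^ d = 0)
    (X : AddSubgroup (Torus d)) (hXclosed : IsClosed (X : Set (Torus d)))
    (hXinf : (X : Set (Torus d)).Infinite)
    (x : Torus d) (hx : x ∈ X) :
    ∃ c : ℕ, 0 < c ∧ ∃ xs : ℕ → Torus d,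
      (∀ n : ℕ, 0 < n → xs n ∈ X ∧ (toralAuto U)^[c * n] (xs n) = xs n) ∧
      Tendsto xs atTop (nhds x) := by
  obtain ⟨c, hc, hperiodic⟩ := exists_periodic_points_in_subgroup_converging_general
    (continuous_torusMk d) (isOpenMap_torusMk d) (isNilpotent_toralEnd_sub_one ⟨d, hUuni⟩)
    hXclosed.isCompact
  obtain ⟨xs, hxs, hlim⟩ := hperiodic x hx
  exact ⟨c, hc, xs, fun n _ ↦ coe_toralEnd U ▸ hxs n, hlim⟩
end
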